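/- Every strong Krylov set-valued map 𝒞 : X → 2^𝒫 admits a strong Markov selection, i.e., a measurable selection x ↦ P_x ∈ 𝒞(x) such that for every finite stopping time τ (with respect to the natural filtration), P_x[θ_τ^{-1}(·) | ℱ_τ](w) = P_{π_τ(w)}(·) for P_x-almost all w. -/

import Mathlib

open MeasureTheory Set
open scoped NNReal

noncomputable section

/-- The space `Ω = C([0,∞) → X)` with the compact-open topology. -/
abbrev IPath (X : Type*) [TopologicalSpace X] : Type _ := C(ℝ≥0, X)

variable {X : Type*} [TopologicalSpace X]

/-- The Borel σ-algebra `ℱ` on the path space. -/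
instance : MeasurableSpace (IPath X) := borel _
instance : BorelSpace (IPath X) := ⟨rfl⟩

/-- The natural filtration `ℱ_s` on path space. -/
def natF (X : Type*) [TopologicalSpace X] [MeasurableSpace X] (s : ℝ≥0) :
    MeasurableSpace (IPath X) :=
  ⨆ t ∈ Iic s, MeasurableSpace.comap (fun w : IPath X => w t) inferInstance

/-- A (finite) stopping time with respect to the natural filtration:
`{τ ≤ s} ∈ ℱ_s` for all `s`. -/
def IsStopT {X : Type*} [TopologicalSpace X] [MeasurableSpace X]
    (τ : IPath X → ℝ≥0) : Prop :=
  ∀ s : ℝ≥0, MeasurableSet[natF X s] {w : IPath X | τ w ≤ s}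

/-- Membership in the σ-algebra `ℱ_τ`:
`A ∈ ℱ` with `A ∩ {τ ≤ s} ∈ ℱ_s` for all `s`. -/
def MemFstopT {X : Type*} [TopologicalSpace X] [MeasurableSpace X]
    (τ : IPath X → ℝ≥0) (A : Set (IPath X)) : Prop :=
  MeasurableSet A ∧
    ∀ s : ℝ≥0, MeasurableSet[natF X s] (A ∩ {w : IPath X | τ w ≤ s})

/-- The random shift `θ_τ : w(·) ↦ w(τ(w) + ·)`. -/
def shiftAt (τ : IPath X → ℝ≥0) (w : IPath X) : IPath X :=
  w.comp ⟨fun t => τ w + t, by fun_prop⟩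

/-- The coordinate map `π_τ(w) = w(τ(w))`. -/
def piAt (τ : IPath X → ℝ≥0) (w : IPath X) : X := w (τ w)

/-- Convexity of a set of probability measures. -/
def ConvexMeasSet {Ω' : Type*} [MeasurableSpace Ω']
    (C : Set (ProbabilityMeasure Ω')) : Prop :=
  ∀ P ∈ C, ∀ Q ∈ C, ∀ a b : ℝ≥0, a + b = 1 →
    ∀ R : ProbabilityMeasure Ω',
      (R : Measure Ω') = a • (P : Measure Ω') + b • (Q : Measure Ω') → R ∈ C

/-- `Q f = ∫ f dQ` for a bounded continuous `f` on path space. -/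
def intBCF (f : BoundedContinuousFunction (IPath X) ℝ)
    (Q : ProbabilityMeasure (IPath X)) : ℝ :=
  ∫ w, f w ∂(Q : Measure (IPath X))

/-- The support function `h_x[f] = sup {P f : P ∈ 𝒞 x}`. -/
def hSupp (C : X → Set (ProbabilityMeasure (IPath X))) (x : X)
    (f : BoundedContinuousFunction (IPath X) ℝ) : ℝ :=
  sSup (intBCF f '' C x)

/-- The set `K(P, τ, 𝒞) = {Q : Q f ≤ ∫ h_{π_τ(w)}[f] dP, ∀ f ∈ C_b(Ω)}`. -/
def KsetT (C : X → Set (ProbabilityMeasure (IPath X)))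
    (P : ProbabilityMeasure (IPath X)) (τ : IPath X → ℝ≥0) :
    Set (ProbabilityMeasure (IPath X)) :=
  {Q | ∀ f : BoundedContinuousFunction (IPath X) ℝ,
    intBCF f Q ≤ ∫ w, hSupp C (piAt τ w) f ∂(P : Measure (IPath X))}

/-- The truncated functional
`ζ_n^τ(P) = ∫_Ω ∫₀^{τ(w)} e^{-λ_n t} φ_n(w(t)) dt P(dw)`. -/
def zetaT (lam : ℝ) (phi : X → ℝ) (τ : IPath X → ℝ≥0)
    (P : ProbabilityMeasure (IPath X)) : ℝ :=
  ∫ w, (∫ t in Ioc (0 : ℝ) ((τ w : ℝ≥0) : ℝ),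
    Real.exp (-lam * t) * phi (w (Real.toNNReal t))) ∂(P : Measure (IPath X))

/-- `θ_τ Q = R` at the level of measures: `R` is the push-forward of `Q` by the
random shift `θ_τ`. -/
def IsShiftAtOf (τ : IPath X → ℝ≥0)
    (Q R : ProbabilityMeasure (IPath X)) : Prop :=
  (R : Measure (IPath X)) = Measure.map (shiftAt τ) (Q : Measure (IPath X))

/-- The set `Γ[P, x, τ](𝒞) = {Q ∈ 𝒞(x) : θ_τ Q ∈ K(P, τ, 𝒞), ζ_n^τ(Q) ≥ ζ_n^τ(P) ∀n}`. -/
def GammaT (C : X → Set (ProbabilityMeasure (IPath X)))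
    (lam : ℕ → ℝ) (phi : ℕ → X → ℝ)
    (P : ProbabilityMeasure (IPath X)) (x : X) (τ : IPath X → ℝ≥0) :
    Set (ProbabilityMeasure (IPath X)) :=
  {Q | Q ∈ C x ∧ (∃ R, IsShiftAtOf τ Q R ∧ R ∈ KsetT C P τ) ∧
    ∀ n, zetaT (lam n) (phi n) τ P ≤ zetaT (lam n) (phi n) τ Q}

/-- A **strong Krylov set-valued map**: nonempty compact convex values, measurable,
`P(Ω_x) = 1` for `P ∈ 𝒞(x)`, and for every `x`, `P ∈ 𝒞(x)` and every positive
stopping time `τ`: `θ_τ P ∈ K(P, τ, 𝒞)` and `θ_τ(Γ[P, x, τ](𝒞)) = K(P, τ, 𝒞)`. -/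
def IsStrongKrylov {X : Type*} [TopologicalSpace X] [MeasurableSpace X]
    (C : X → Set (ProbabilityMeasure (IPath X)))
    (lam : ℕ → ℝ) (phi : ℕ → X → ℝ) : Prop :=
  (∀ x, (C x).Nonempty ∧ IsCompact (C x) ∧ ConvexMeasSet (C x)) ∧
  (∀ K : Set (ProbabilityMeasure (IPath X)), IsClosed K →
    MeasurableSet {x | (C x ∩ K).Nonempty}) ∧
  (∀ x, ∀ P ∈ C x, (P : Measure (IPath X)) {w : IPath X | w 0 = x} = 1) ∧
  (∀ x, ∀ P ∈ C x, ∀ τ : IPath X → ℝ≥0, IsStopT τ → (∀ w, 0 < τ w) →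
    ∃ R, IsShiftAtOf τ P R ∧ R ∈ KsetT C P τ) ∧
  (∀ x, ∀ P ∈ C x, ∀ τ : IPath X → ℝ≥0, IsStopT τ → (∀ w, 0 < τ w) →
    ∀ R : ProbabilityMeasure (IPath X),
      (R ∈ KsetT C P τ ↔ ∃ Q ∈ GammaT C lam phi P x τ, IsShiftAtOf τ Q R))

/-- The properties of the data `(λ_n, φ_n)`: an enumeration of `Λ × Φ` where
`Λ ⊆ (0,∞)` is dense in `(0,∞)` and `Φ` is a countable family of bounded continuous
functions on `X` that strongly separates points and is closed under multiplication. -/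
def GoodData {X : Type*} [TopologicalSpace X] (lam : ℕ → ℝ) (phi : ℕ → X → ℝ) : Prop :=
  (∀ n, 0 < lam n) ∧
  (Ioi (0 : ℝ) ⊆ closure (range lam)) ∧
  (∀ n, Continuous (phi n)) ∧
  (∀ n, ∃ M, ∀ y, |phi n y| ≤ M) ∧
  (∀ x : X, ∀ V ∈ nhds x, ∃ n, ∃ ε > 0, ∀ y ∉ V, ε ≤ |phi n x - phi n y|) ∧
  (∀ m n, ∃ k, phi k = fun y => phi m y * phi n y) ∧
  (∀ m n, ∃ k, lam k = lam m ∧ phi k = phi n)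

/-!
Over `𝒞(x)`, maximize one after the other the discounted payoffs `P ↦ ∫₀^∞ e^{-lₙ t} P[ψₙ(w(t))] dt`
of a countable list of nonnegative functions that determines the one-dimensional marginals.
Comparing a maximizer `P` with a law that collects at least as much before time `t` and continues
optimally shows that `P` continues optimally as well. Hence there is only one maximizer `P_x`, it
depends measurably on `x`, and it has the Markov property at deterministic times.

At a bounded stopping time, comparing the stopped value with the optimal value along a deterministic
grid shows that the discounted defect `e^{-l τ} (f ∘ θ_τ - P_{π_τ} f)` of the first payoff `f` has a
nonnegative integral over every event of `ℱ_τ`; as `e^{l τ} ≥ 1`, so does the undiscounted defect.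
Its mean is also at most `0`, because the shifted law lies in `K(P_x, τ, 𝒞)`. Therefore it vanishes,
the shifted law is in `K` for the sets of maximizers of `f`, and the argument can be repeated with
the next payoff. A general stopping time is cut along `⌈τ⌉`.
-/

section

open Filter Topology ProbabilityTheory BoundedContinuousFunction
open scoped ENNReal

/-! ### Path space -/

section PathSpace

namespace IPath

instance instPolishSpace [PolishSpace X] : PolishSpace (IPath X) := by
  let := TopologicalSpace.upgradeIsCompletelyMetrizable X
  have : TopologicalSpace.IsCompletelyMetrizableSpace (IPath X) :=
    TopologicalSpace.IsCompletelyMetrizableSpace.of_completeSpace_metrizable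
  infer_instance

lemma measurable_eval [MeasurableSpace X] [BorelSpace X] (t : ℝ≥0) :
    Measurable fun w : IPath X => w t :=
  Continuous.measurable (by fun_prop)

variable [PolishSpace X] [MeasurableSpace X] [BorelSpace X]

lemma measurable_of_forall_eval {α : Type*} [MeasurableSpace α] {f : α → IPath X}
    (hf : ∀ t, Measurable fun a => f a t) : Measurable f := by
  let sample : IPath X → ℕ → X := fun w n => w (TopologicalSpace.denseSeq ℝ≥0 n)
  have sample_continuous : Continuous sample := continuous_pi fun _ => by fun_prop
  have sample_injective : Function.Injective sample := fun v w hvw =>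
    DFunLike.coe_injective <| (TopologicalSpace.denseRange_denseSeq ℝ≥0).equalizer
      v.continuous w.continuous (funext fun n => congrFun hvw n)
  rw [← (sample_continuous.measurableEmbedding sample_injective).measurable_comp_iff]
  exact measurable_pi_lambda _ fun _ => hf _

lemma measurable_uncurry_eval : Measurable fun p : ℝ≥0 × IPath X => p.2 p.1 :=
  Continuous.measurable (by fun_prop)

lemma measurable_piAt {τ : IPath X → ℝ≥0} (hτ : Measurable τ) : Measurable (piAt τ) :=
  measurable_uncurry_eval.comp (hτ.prodMk measurable_id)

lemma measurable_shiftAt {τ : IPath X → ℝ≥0} (hτ : Measurable τ) : Measurable (shiftAt τ) :=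
  measurable_of_forall_eval fun t =>
    measurable_uncurry_eval.comp ((hτ.add_const t).prodMk measurable_id)

end IPath

section Filtration

variable [MeasurableSpace X]

lemma natF_le [BorelSpace X] (s : ℝ≥0) : natF X s ≤ borel (IPath X) :=
  iSup₂_le fun t _ => (IPath.measurable_eval t).comap_le

lemma natF_mono : Monotone (natF X) := fun _ _ hst =>
  biSup_mono fun _ hr => le_trans hr hst

lemma measurable_eval_natF {s t : ℝ≥0} (hts : t ≤ s) :
    Measurable[natF X s] fun w : IPath X => w t :=
  measurable_iff_comap_le.2 (le_iSup₂_of_le t hts le_rfl)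

lemma measurable_natF_of_forall_eval {α : Type*} {m : MeasurableSpace α} {s : ℝ≥0}
    {f : α → IPath X} (hf : ∀ t ≤ s, Measurable fun a => f a t) : Measurable[m, natF X s] f := by
  simp only [measurable_iff_comap_le, natF, MeasurableSpace.comap_iSup,
    MeasurableSpace.comap_comp]
  exact iSup₂_le fun t ht => (hf t ht).comap_le

lemma mem_iff_mem_of_measurableSet_natF {s : ℝ≥0} {A : Set (IPath X)}
    (hA : MeasurableSet[natF X s] A) {v w : IPath X} (hvw : ∀ t ≤ s, v t = w t) :
    v ∈ A ↔ w ∈ A := by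
  let restrict : IPath X → Iic s → X := fun w r => w r
  have natF_le_comap : natF X s ≤ MeasurableSpace.comap restrict MeasurableSpace.pi := by
    refine iSup₂_le fun t ht => ?_
    rw [show (fun w : IPath X => w t) = (fun g : Iic s → X => g ⟨t, ht⟩) ∘ restrict from rfl,
      ← MeasurableSpace.comap_comp]
    exact MeasurableSpace.comap_mono (measurable_pi_apply _).comap_le
  obtain ⟨B, -, rfl⟩ := natF_le_comap A hA
  have restrict_eq : restrict v = restrict w := funext fun r => hvw r r.2
  simp only [mem_preimage, restrict_eq]

lemma IsStopT.measurable [BorelSpace X] {τ : IPath X → ℝ≥0} (hτ : IsStopT τ) : Measurable τ :=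
  measurable_of_Iic fun s => natF_le s _ (hτ s)

lemma isStopT_const (t : ℝ≥0) : IsStopT fun _ : IPath X => t :=
  fun _ => MeasurableSet.const _

end Filtration

end PathSpace

/-! ### Determining classes for finite measures -/

section Determining

variable {E : Type*} [TopologicalSpace E] [PolishSpace E] [MeasurableSpace E] [BorelSpace E]

lemma ext_of_forall_mem_submonoid_integral_eq {μ ν : Measure E} [IsFiniteMeasure μ]
    [IsFiniteMeasure ν] (M : Submonoid (E →ᵇ ℝ)) (hsep : ∀ x y, x ≠ y → ∃ f ∈ M, f x ≠ f y)
    (heq : ∀ f ∈ M, ∫ x, f x ∂μ = ∫ x, f x ∂ν) : μ = ν := by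
  let A : StarSubalgebra ℝ (E →ᵇ ℝ) :=
    { Algebra.adjoin ℝ (M : Set (E →ᵇ ℝ)) with
      star_mem' := fun {f} hf => by rwa [show star f = f from by ext; simp] }
  refine ext_of_forall_mem_subalgebra_integral_eq_of_polish (𝕜 := ℝ) (A := A) ?_ ?_
  · intro x y hxy
    obtain ⟨f, hf, hfxy⟩ := hsep x y hxy
    exact ⟨f, ⟨f.toContinuousMap, ⟨f, Algebra.subset_adjoin hf, rfl⟩, rfl⟩, hfxy⟩
  · intro f hf
    have hf_span : f ∈ Submodule.span ℝ (M : Set (E →ᵇ ℝ)) := by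
      have : f ∈ Subalgebra.toSubmodule (Algebra.adjoin ℝ (M : Set (E →ᵇ ℝ))) := hf
      rwa [Algebra.adjoin_eq_span, Submonoid.closure_eq] at this
    clear hf
    induction hf_span using Submodule.span_induction with
    | mem f hf => exact heq f hf
    | zero => simp
    | add f g _ _ hf hg =>
      simp only [BoundedContinuousFunction.coe_add, Pi.add_apply]
      rw [integral_add (f.integrable μ) (g.integrable μ),
        integral_add (f.integrable ν) (g.integrable ν), hf, hg]
    | smul c f _ hf =>
      simp only [BoundedContinuousFunction.coe_smul, smul_eq_mul]
      rw [integral_const_mul, integral_const_mul, hf]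

/-- The distance to `y`, cut off at `1`, as a bounded continuous function. -/
def truncDist {E : Type*} [PseudoMetricSpace E] (y : E) : E →ᵇ ℝ :=
  BoundedContinuousFunction.ofNormedAddCommGroup (fun x => min 1 (dist x y)) (by fun_prop) 1
    fun x => by
      rw [Real.norm_eq_abs, abs_of_nonneg (le_min zero_le_one dist_nonneg)]
      exact min_le_left _ _

lemma exists_truncDist_denseSeq_ne {E : Type*} [MetricSpace E] [TopologicalSpace.SeparableSpace E]
    [Nonempty E] {x y : E} (hxy : x ≠ y) :
    ∃ n, truncDist (TopologicalSpace.denseSeq E n) x ≠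
      truncDist (TopologicalSpace.denseSeq E n) y := by
  have hpos : 0 < min 1 (dist x y / 2) := lt_min one_pos (half_pos (dist_pos.2 hxy))
  obtain ⟨n, hn⟩ := (TopologicalSpace.denseRange_denseSeq E).exists_dist_lt x hpos
  refine ⟨n, ne_of_lt ?_⟩
  calc min 1 (dist x (TopologicalSpace.denseSeq E n))
      ≤ dist x (TopologicalSpace.denseSeq E n) := min_le_right _ _
    _ < min 1 (dist x y / 2) := hn
    _ ≤ min 1 (dist y (TopologicalSpace.denseSeq E n)) := by
      refine le_min (min_le_left _ _) ?_
      have := dist_triangle_right x y (TopologicalSpace.denseSeq E n)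
      have := min_le_right 1 (dist x y / 2)
      linarith

variable (E) in
lemma exists_seq_determining_finite_measures : ∃ H : ℕ → E →ᵇ ℝ,
    ∀ (μ ν : Measure E) [IsFiniteMeasure μ] [IsFiniteMeasure ν],
      (∀ n, ∫ x, H n x ∂μ = ∫ x, H n x ∂ν) → μ = ν := by
  rcases isEmpty_or_nonempty E with _ | _
  · exact ⟨fun _ => 0, fun _ _ _ _ _ => Subsingleton.elim _ _⟩
  let := TopologicalSpace.upgradeIsCompletelyMetrizable E
  let d : ℕ → E →ᵇ ℝ := fun n => truncDist (TopologicalSpace.denseSeq E n)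
  refine ⟨fun n => ((Denumerable.ofNat (List ℕ) n).map d).prod, fun μ ν _ _ heq => ?_⟩
  refine ext_of_forall_mem_submonoid_integral_eq (Submonoid.closure (range d)) ?_ ?_
  · intro x y hxy
    obtain ⟨n, hn⟩ := exists_truncDist_denseSeq_ne hxy
    exact ⟨d n, Submonoid.subset_closure ⟨n, rfl⟩, hn⟩
  · intro f hf
    obtain ⟨l, hl, rfl⟩ := Submonoid.exists_list_of_mem_closure hf
    obtain ⟨l, rfl⟩ : l ∈ range (List.map d) := by rwa [Set.range_list_map]
    simpa only [Denumerable.ofNat_encode] using heq (Encodable.encode l)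

end Determining

/-! ### Maximization over compact sets -/

section CompactMax

variable {E : Type*} [TopologicalSpace E]

lemma le_sSup_image {K : Set E} (hK : IsCompact K) {u : E → ℝ} (hu : Continuous u) {p : E}
    (hp : p ∈ K) : u p ≤ sSup (u '' K) :=
  le_csSup (hK.bddAbove_image hu.continuousOn) (mem_image_of_mem u hp)

lemma le_sSup_image_iff {K : Set E} (hK : IsCompact K) (hne : K.Nonempty) {u : E → ℝ}
    (hu : Continuous u) {a : ℝ} : a ≤ sSup (u '' K) ↔ (K ∩ {p | a ≤ u p}).Nonempty := by
  constructor
  · intro ha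
    obtain ⟨p, hp, hmax⟩ := hK.exists_sSup_image_eq hne hu.continuousOn
    exact ⟨p, hp, ha.trans_eq hmax⟩
  · rintro ⟨p, hp, ha⟩
    exact ha.trans (le_sSup_image hK hu hp)

lemma sSup_image_add_mul_sub {K : Set E} (hK : IsCompact K) (hne : K.Nonempty) {u v : E → ℝ}
    (hu : Continuous u) (hv : Continuous v) (k m : ℝ) :
    sSup ((fun p => u p + k * (v p - m)) '' K) = sSup ((fun p => u p + k * v p) '' K) - k * m := by
  have hbdd : BddAbove ((fun p => u p + k * v p) '' K) :=
    hK.bddAbove_image (by fun_prop)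
  have := (OrderIso.subRight (k * m)).map_csSup' (hne.image _) hbdd
  rw [OrderIso.subRight_apply, image_image] at this
  rw [this]
  congr 2
  ext p
  simp only [OrderIso.subRight_apply]
  ring

variable [T2Space E]

lemma exists_mem_iInter_forall_le {D : ℕ → Set E} (hD : ∀ n, D (n + 1) ⊆ D n)
    (hcpt : ∀ n, IsCompact (D n)) (hne : ∀ n, (D n).Nonempty) {u : ℕ → E → ℝ}
    (hu : ∀ n, Continuous (u n)) (hanti : ∀ n, ∀ p ∈ D (n + 1), u (n + 1) p ≤ u n p) {a : ℝ}
    (ha : ∀ n, a ≤ sSup (u n '' D n)) : ∃ p ∈ ⋂ n, D n, ∀ n, a ≤ u n p := by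
  have hclosed : ∀ n, IsClosed {p | a ≤ u n p} := fun n => isClosed_le continuous_const (hu n)
  obtain ⟨p, hp⟩ := IsCompact.nonempty_iInter_of_sequence_nonempty_isCompact_isClosed
    (fun n => D n ∩ {p | a ≤ u n p})
    (fun n p hp => ⟨hD n hp.1, le_trans hp.2 (hanti n p hp.1)⟩)
    (fun n => (le_sSup_image_iff (hcpt n) (hne n) (hu n)).1 (ha n))
    ((hcpt 0).inter_right (hclosed 0)) (fun n => (hcpt n).isClosed.inter (hclosed n))
  rw [mem_iInter] at hp
  exact ⟨p, mem_iInter.2 fun n => (hp n).1, fun n => (hp n).2⟩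

lemma tendsto_sSup_image_of_antitone {D : ℕ → Set E} (hD : ∀ n, D (n + 1) ⊆ D n)
    (hcpt : ∀ n, IsCompact (D n)) (hne : ∀ n, (D n).Nonempty) {u : ℕ → E → ℝ}
    (hu : ∀ n, Continuous (u n)) (hanti : ∀ n, ∀ p ∈ D (n + 1), u (n + 1) p ≤ u n p) {a : ℝ}
    (hle : ∀ n, a ≤ sSup (u n '' D n))
    (hge : ∀ p ∈ ⋂ n, D n, ∀ b, (∀ n, b ≤ u n p) → b ≤ a) :
    Tendsto (fun n => sSup (u n '' D n)) atTop (𝓝 a) := by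
  refine tendsto_atTop_isGLB (antitone_nat_of_succ_le fun n => ?_)
    ⟨by rintro _ ⟨n, rfl⟩; exact hle n, fun b hb => ?_⟩
  · obtain ⟨p, hp, hmax⟩ := (hcpt (n + 1)).exists_sSup_image_eq (hne _) (hu _).continuousOn
    rw [hmax]
    exact (hanti n p hp).trans (le_sSup_image (hcpt n) (hu n) (hD n hp))
  · obtain ⟨p, hp, hbp⟩ := exists_mem_iInter_forall_le hD hcpt hne hu hanti
      fun n => hb (mem_range_self n)
    exact hge p hp b hbp

lemma tendsto_sSup_image_iInter {D : ℕ → Set E} (hD : ∀ n, D (n + 1) ⊆ D n)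
    (hcpt : ∀ n, IsCompact (D n)) (hne : ∀ n, (D n).Nonempty) {u : E → ℝ} (hu : Continuous u) :
    Tendsto (fun n => sSup (u '' D n)) atTop (𝓝 (sSup (u '' ⋂ n, D n))) := by
  have hcpt_iInter : IsCompact (⋂ n, D n) :=
    (hcpt 0).of_isClosed_subset (isClosed_iInter fun n => (hcpt n).isClosed) (iInter_subset _ 0)
  have hne_iInter : (⋂ n, D n).Nonempty :=
    IsCompact.nonempty_iInter_of_sequence_nonempty_isCompact_isClosed D hD hne (hcpt 0)
      fun n => (hcpt n).isClosed
  refine tendsto_sSup_image_of_antitone hD hcpt hne (fun _ => hu) (fun _ _ _ => le_rfl)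
    (fun n => ?_) fun p hp b hb => (hb 0).trans (le_sSup_image hcpt_iInter hu hp)
  exact csSup_le_csSup ((hcpt n).bddAbove_image hu.continuousOn) (hne_iInter.image u)
    (image_mono (iInter_subset D n))

/-- Adding a large multiple of `v` forces the maximizers of `u` into the face where `v` is
maximal. -/
lemma tendsto_sSup_image_add_mul {K : Set E} (hK : IsCompact K) (hne : K.Nonempty) {u v : E → ℝ}
    (hu : Continuous u) (hv : Continuous v) :
    Tendsto (fun k : ℕ => sSup ((fun p => u p + k * v p) '' K) - k * sSup (v '' K)) atTop
      (𝓝 (sSup (u '' {p ∈ K | v p = sSup (v '' K)}))) := by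
  set m := sSup (v '' K)
  have v_le : ∀ p ∈ K, v p ≤ m := fun p hp => le_sSup_image hK hv hp
  have face_compact : IsCompact {p ∈ K | v p = m} :=
    hK.inter_right (isClosed_eq hv continuous_const)
  have face_nonempty : {p ∈ K | v p = m}.Nonempty := by
    obtain ⟨p, hp, hmax⟩ := hK.exists_sSup_image_eq hne hv.continuousOn
    exact ⟨p, hp, hmax.symm⟩
  have hcont : ∀ k : ℕ, Continuous fun p => u p + k * (v p - m) := fun k => by fun_prop
  simp_rw [← sSup_image_add_mul_sub hK hne hu hv]
  refine tendsto_sSup_image_of_antitone (D := fun _ => K) (fun _ => Subset.rfl) (fun _ => hK)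
    (fun _ => hne) hcont (fun k p hp => ?_) (fun k => ?_) fun p hp b hb => ?_
  · push_cast
    linarith [v_le p hp]
  · obtain ⟨p, ⟨hp, hvp⟩, hmax⟩ := face_compact.exists_sSup_image_eq face_nonempty hu.continuousOn
    simpa [hmax, hvp] using le_sSup_image hK (hcont k) hp
  · rw [iInter_const] at hp
    have hvp : v p = m := by
      by_contra hne_m
      have hpos : 0 < m - v p := sub_pos.2 ((v_le p hp).lt_of_ne hne_m)
      obtain ⟨k, hk⟩ := exists_nat_gt ((u p - b) / (m - v p))
      rw [div_lt_iff₀ hpos] at hk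
      linarith [hb k]
    simpa using (hb 0).trans_eq (by simp) |>.trans (le_sSup_image face_compact hu ⟨hp, hvp⟩)

end CompactMax

/-! ### Measurable compact-valued maps -/

/-- A nonempty compact-valued map which is measurable in the sense that the points whose value
meets a given closed set form a measurable set. -/
structure IsMeasurableCompactValued {S E : Type*} [MeasurableSpace S] [TopologicalSpace E]
    (C : S → Set E) : Prop where
  nonempty : ∀ x, (C x).Nonempty
  isCompact : ∀ x, IsCompact (C x)
  measurableSet_nonempty_inter : ∀ K, IsClosed K → MeasurableSet {x | (C x ∩ K).Nonempty}

/-- The points of `C x` at which `u` attains its maximum over `C x`. -/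
def argmaxOn {S E : Type*} (C : S → Set E) (u : E → ℝ) (x : S) : Set E :=
  {p ∈ C x | u p = sSup (u '' C x)}

/-- Successive maximization: `lexArgmax C u n x` consists of the points of `C x` that maximize
`u 0`, among those `u 1`, and so on up to `u (n - 1)`. -/
def lexArgmax {S E : Type*} (C : S → Set E) (u : ℕ → E → ℝ) : ℕ → S → Set E
  | 0 => C
  | n + 1 => argmaxOn (lexArgmax C u n) (u n)

/-- The lexicographic maximizers of the whole sequence `u` over `C x`. -/
def lexArgmaxAll {S E : Type*} (C : S → Set E) (u : ℕ → E → ℝ) (x : S) : Set E :=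
  ⋂ n, lexArgmax C u n x

section LexArgmax

variable {S E : Type*} {C : S → Set E} {u : ℕ → E → ℝ} {x : S} {p : E}

lemma lexArgmax_succ_subset (C : S → Set E) (u : ℕ → E → ℝ) (n : ℕ) (x : S) :
    lexArgmax C u (n + 1) x ⊆ lexArgmax C u n x :=
  sep_subset _ _

lemma lexArgmaxAll_subset : lexArgmaxAll C u x ⊆ C x :=
  iInter_subset (fun n => lexArgmax C u n x) 0

lemma eq_sSup_of_mem_lexArgmaxAll (hp : p ∈ lexArgmaxAll C u x) (n : ℕ) :
    u n p = sSup (u n '' lexArgmax C u n x) :=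
  (mem_iInter.1 hp (n + 1)).2

lemma eq_of_mem_lexArgmaxAll (hu : ∀ p q, (∀ n, u n p = u n q) → p = q) {q : E}
    (hp : p ∈ lexArgmaxAll C u x) (hq : q ∈ lexArgmaxAll C u x) : p = q :=
  hu p q fun n =>
    (eq_sSup_of_mem_lexArgmaxAll hp n).trans (eq_sSup_of_mem_lexArgmaxAll hq n).symm

end LexArgmax

namespace IsMeasurableCompactValued

variable {S E : Type*} [MeasurableSpace S] [TopologicalSpace E] {C : S → Set E}

lemma measurable_sSup_image (hC : IsMeasurableCompactValued C) {u : E → ℝ} (hu : Continuous u) :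
    Measurable fun x => sSup (u '' C x) := by
  refine measurable_of_Ici fun a => ?_
  have : (fun x => sSup (u '' C x)) ⁻¹' Ici a = {x | (C x ∩ {p | a ≤ u p}).Nonempty} :=
    ext fun x => le_sSup_image_iff (hC.isCompact x) (hC.nonempty x) hu
  rw [this]
  exact hC.measurableSet_nonempty_inter _ (isClosed_le continuous_const hu)

lemma nonempty_argmaxOn_inter_iff (hC : IsMeasurableCompactValued C) {u : E → ℝ}
    (hu : Continuous u) {K : Set E} (hK : IsClosed K) (x : S) :
    (argmaxOn C u x ∩ K).Nonempty ↔ (C x ∩ K).Nonempty ∧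
      ∀ q : ℚ, (q : ℝ) ≤ sSup (u '' C x) → (C x ∩ (K ∩ {p | (q : ℝ) ≤ u p})).Nonempty := by
  constructor
  · rintro ⟨p, ⟨hp, hmax⟩, hpK⟩
    exact ⟨⟨p, hp, hpK⟩, fun q hq => ⟨p, hp, hpK, hq.trans_eq hmax.symm⟩⟩
  · rintro ⟨hne, hq⟩
    obtain ⟨p, ⟨hp, hpK⟩, hmax⟩ :=
      ((hC.isCompact x).inter_right hK).exists_isMaxOn hne hu.continuousOn
    refine ⟨p, ⟨hp, le_antisymm (le_sSup_image (hC.isCompact x) hu hp) ?_⟩, hpK⟩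
    refine le_of_forall_rat_lt_imp_le fun q hlt => ?_
    obtain ⟨r, hr, hrK, hqr⟩ := hq q hlt.le
    exact hqr.trans (hmax ⟨hr, hrK⟩)

lemma argmaxOn (hC : IsMeasurableCompactValued C) {u : E → ℝ} (hu : Continuous u) :
    IsMeasurableCompactValued (argmaxOn C u) where
  nonempty x := by
    obtain ⟨p, hp, hmax⟩ := (hC.isCompact x).exists_sSup_image_eq (hC.nonempty x) hu.continuousOn
    exact ⟨p, hp, hmax.symm⟩
  isCompact x := (hC.isCompact x).inter_right (isClosed_eq hu continuous_const)
  measurableSet_nonempty_inter K hK := by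
    simp only [hC.nonempty_argmaxOn_inter_iff hu hK, ofPred_and, ofPred_forall]
    refine (hC.measurableSet_nonempty_inter K hK).inter (MeasurableSet.iInter fun q => ?_)
    exact (measurableSet_le measurable_const (hC.measurable_sSup_image hu)).imp
      (hC.measurableSet_nonempty_inter _ (hK.inter (isClosed_le continuous_const hu)))

lemma lexArgmax (hC : IsMeasurableCompactValued C) {u : ℕ → E → ℝ} (hu : ∀ n, Continuous (u n))
    (n : ℕ) : IsMeasurableCompactValued (lexArgmax C u n) := by
  induction n with
  | zero => exact hC
  | succ n ih => exact ih.argmaxOn (hu n)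

variable [T2Space E]

lemma iInter {D : ℕ → S → Set E} (hD : ∀ n, IsMeasurableCompactValued (D n))
    (hsub : ∀ n x, D (n + 1) x ⊆ D n x) : IsMeasurableCompactValued fun x => ⋂ n, D n x := by
  have nonempty_iff : ∀ K, IsClosed K → ∀ x,
      ((⋂ n, D n x) ∩ K).Nonempty ↔ ∀ n, (D n x ∩ K).Nonempty := by
    intro K hK x
    refine ⟨fun h n => h.mono (inter_subset_inter_left _ (iInter_subset _ n)), fun h => ?_⟩
    rw [iInter_inter]
    exact IsCompact.nonempty_iInter_of_sequence_nonempty_isCompact_isClosed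
      (fun n => D n x ∩ K) (fun n => inter_subset_inter_left _ (hsub n x)) h
      (((hD 0).isCompact x).inter_right hK) fun n => ((hD n).isCompact x).isClosed.inter hK
  refine ⟨fun x => ?_, fun x => ?_, fun K hK => ?_⟩
  · simpa using (nonempty_iff univ isClosed_univ x).2 fun n => by simpa using (hD n).nonempty x
  · exact ((hD 0).isCompact x).of_isClosed_subset
      (isClosed_iInter fun n => ((hD n).isCompact x).isClosed) (iInter_subset _ 0)
  · simp only [nonempty_iff K hK, ofPred_forall]
    exact MeasurableSet.iInter fun n => (hD n).measurableSet_nonempty_inter K hK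

lemma lexArgmaxAll (hC : IsMeasurableCompactValued C) {u : ℕ → E → ℝ}
    (hu : ∀ n, Continuous (u n)) : IsMeasurableCompactValued (lexArgmaxAll C u) :=
  iInter (hC.lexArgmax hu) (lexArgmax_succ_subset C u)

lemma exists_selection_of_injective (hC : IsMeasurableCompactValued C) {u : ℕ → E → ℝ}
    (hu : ∀ n, Continuous (u n)) (huinj : ∀ p q, (∀ n, u n p = u n q) → p = q) :
    ∃ s : S → E, (∀ x, s x ∈ _root_.lexArgmaxAll C u x) ∧
      ∀ U, IsOpen U → MeasurableSet (s ⁻¹' U) := by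
  have hlex := hC.lexArgmaxAll hu
  choose s hs using hlex.nonempty
  refine ⟨s, hs, fun U hU => ?_⟩
  have preimage_eq : s ⁻¹' U = {x | (_root_.lexArgmaxAll C u x ∩ Uᶜ).Nonempty}ᶜ := by
    ext x
    refine ⟨fun hxU ⟨p, hp, hpU⟩ => hpU ?_, fun hx => by_contra fun hxU => hx ⟨s x, hs x, hxU⟩⟩
    rwa [eq_of_mem_lexArgmaxAll huinj hp (hs x)]
  rw [preimage_eq]
  exact (hlex.measurableSet_nonempty_inter _ hU.isClosed_compl).compl

end IsMeasurableCompactValued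

/-! ### Measurable families of laws and the sets `K(P, τ, 𝒞)` -/

/-- Probability measures on path space. -/
abbrev PathLaw (X : Type*) [TopologicalSpace X] : Type _ := ProbabilityMeasure (IPath X)

section LawFamilies

variable {S E : Type*} [MeasurableSpace S] [MeasurableSpace E]

lemma measurable_coe_of_isOpen_preimage [TopologicalSpace E] [BorelSpace E]
    [HasOuterApproxClosed E] {s : S → ProbabilityMeasure E}
    (hs : ∀ U, IsOpen U → MeasurableSet (s ⁻¹' U)) : Measurable fun x => (s x : Measure E) := by
  refine Measurable.measure_of_isPiSystem_of_isProbabilityMeasure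
    (S := {U | IsOpen U}) BorelSpace.measurable_eq isPiSystem_isOpen fun U hU => ?_
  have lsc : LowerSemicontinuous fun P : ProbabilityMeasure E => (P : Measure E) U := fun P =>
    lowerSemicontinuousAt_iff_le_liminf.2 <|
      ProbabilityMeasure.le_liminf_measure_open_of_tendsto (L := 𝓝 P) tendsto_id hU
  exact measurable_of_Ioi fun c => hs _ (lsc.isOpen_preimage c)

lemma IsMeasurableCompactValued.exists_measurable_selection [TopologicalSpace E] [PolishSpace E]
    [BorelSpace E] {C : S → Set (ProbabilityMeasure E)} (hC : IsMeasurableCompactValued C) :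
    ∃ s : S → ProbabilityMeasure E, (∀ x, s x ∈ C x) ∧
      ∀ U, IsOpen U → MeasurableSet (s ⁻¹' U) := by
  obtain ⟨H, hH⟩ := exists_seq_determining_finite_measures E
  obtain ⟨s, hs, hs_meas⟩ := hC.exists_selection_of_injective
    (u := fun n P => ∫ x, H n x ∂(P : Measure E))
    (fun n => ProbabilityMeasure.continuous_integral_boundedContinuousFunction (H n))
    fun P Q hPQ => Subtype.ext (hH P Q hPQ)
  exact ⟨s, fun x => lexArgmaxAll_subset (hs x), hs_meas⟩

/-- A measurable family of probability measures, as a Markov kernel. -/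
def lawKernel (s : S → ProbabilityMeasure E) (hs : Measurable fun x => (s x : Measure E)) :
    Kernel S E :=
  ⟨fun x => (s x : Measure E), hs⟩

instance (s : S → ProbabilityMeasure E) (hs : Measurable fun x => (s x : Measure E)) :
    IsMarkovKernel (lawKernel s hs) :=
  ⟨fun x => inferInstanceAs (IsProbabilityMeasure (s x : Measure E))⟩

lemma integrable_of_measurable_of_abs_le {μ : Measure S} [IsFiniteMeasure μ] {F : S → ℝ}
    (hF : Measurable F) {M : ℝ} (hM : ∀ a, |F a| ≤ M) : Integrable F μ :=
  Integrable.of_bound hF.aestronglyMeasurable M (Eventually.of_forall hM)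

lemma integral_snd_compProd (μ : Measure S) [IsFiniteMeasure μ] (κ : Kernel S E)
    [IsFiniteKernel κ] {F : E → ℝ} (hF : Measurable F) {M : ℝ} (hM : ∀ a, |F a| ≤ M) :
    ∫ a, F a ∂(μ ⊗ₘ κ).snd = ∫ x, ∫ a, F a ∂κ x ∂μ := by
  rw [Measure.snd, integral_map measurable_snd.aemeasurable hF.aestronglyMeasurable]
  exact Measure.integral_compProd (integrable_of_measurable_of_abs_le (hF.comp measurable_snd)
    fun p => hM p.2)

lemma map_eq_snd_compProd [TopologicalSpace E] [PolishSpace E] [BorelSpace E] {μ : Measure S}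
    [IsFiniteMeasure μ] {κ : Kernel S E} [IsFiniteKernel κ] {θ : S → E} (hθ : Measurable θ)
    (h : ∀ f : E →ᵇ ℝ, ∫ x, f (θ x) ∂μ = ∫ x, ∫ a, f a ∂κ x ∂μ) :
    μ.map θ = (μ ⊗ₘ κ).snd := by
  have := μ.isFiniteMeasure_map θ
  refine ext_of_forall_integral_eq_of_IsFiniteMeasure fun f => ?_
  rw [integral_map hθ.aemeasurable f.continuous.aestronglyMeasurable, h f,
    integral_snd_compProd μ κ f.continuous.measurable f.norm_coe_le_norm]

end LawFamilies

section SupportFunction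

lemma intBCF_add (f g : IPath X →ᵇ ℝ) (P : PathLaw X) :
    intBCF (f + g) P = intBCF f P + intBCF g P :=
  integral_add (f.integrable _) (g.integrable _)

lemma intBCF_smul (c : ℝ) (f : IPath X →ᵇ ℝ) (P : PathLaw X) :
    intBCF (c • f) P = c * intBCF f P :=
  integral_const_mul _ _

lemma continuous_intBCF (f : IPath X →ᵇ ℝ) : Continuous (intBCF f) :=
  ProbabilityMeasure.continuous_integral_boundedContinuousFunction f

lemma abs_intBCF_le (f : IPath X →ᵇ ℝ) (P : PathLaw X) : |intBCF f P| ≤ ‖f‖ :=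
  BoundedContinuousFunction.norm_integral_le_norm (P : Measure (IPath X)) f

lemma measurable_intBCF {S : Type*} [MeasurableSpace S] {s : S → PathLaw X}
    (hs : Measurable fun x => (s x : Measure (IPath X))) (f : IPath X →ᵇ ℝ) :
    Measurable fun x => intBCF f (s x) :=
  (StronglyMeasurable.integral_kernel (κ := lawKernel s hs)
    f.continuous.measurable.stronglyMeasurable).measurable

lemma exists_mixture {S T : Type*} [MeasurableSpace S] [MeasurableSpace T] {s : S → PathLaw X}
    (hs : Measurable fun x => (s x : Measure (IPath X))) (μ : Measure T) [IsProbabilityMeasure μ]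
    {g : T → S} (hg : Measurable g) :
    ∃ R : PathLaw X, ∀ f : IPath X →ᵇ ℝ, intBCF f R = ∫ a, intBCF f (s (g a)) ∂μ := by
  let κ : Kernel T (IPath X) := (lawKernel s hs).comap g hg
  exact ⟨⟨(μ ⊗ₘ κ).snd, inferInstance⟩, fun f =>
    integral_snd_compProd μ κ f.continuous.measurable f.norm_coe_le_norm⟩

variable {C : X → Set (PathLaw X)}

lemma intBCF_le_hSupp {x : X} {P : PathLaw X} (hP : P ∈ C x) (f : IPath X →ᵇ ℝ) :
    intBCF f P ≤ hSupp C x f := by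
  refine le_csSup ⟨‖f‖, ?_⟩ (mem_image_of_mem _ hP)
  rintro _ ⟨Q, -, rfl⟩
  exact (le_abs_self _).trans (abs_intBCF_le f Q)

namespace IsMeasurableCompactValued

variable [MeasurableSpace X] (hC : IsMeasurableCompactValued C)
include hC

lemma exists_intBCF_eq_hSupp (x : X) (f : IPath X →ᵇ ℝ) :
    ∃ P ∈ C x, intBCF f P = hSupp C x f := by
  obtain ⟨P, hP, hmax⟩ :=
    (hC.isCompact x).exists_sSup_image_eq (hC.nonempty x) (continuous_intBCF f).continuousOn
  exact ⟨P, hP, hmax.symm⟩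

lemma abs_hSupp_le (x : X) (f : IPath X →ᵇ ℝ) : |hSupp C x f| ≤ ‖f‖ := by
  obtain ⟨P, -, hP⟩ := hC.exists_intBCF_eq_hSupp x f
  exact hP ▸ abs_intBCF_le f P

lemma measurable_hSupp (f : IPath X →ᵇ ℝ) : Measurable fun x => hSupp C x f :=
  hC.measurable_sSup_image (continuous_intBCF f)

lemma integrable_hSupp_comp (f : IPath X →ᵇ ℝ) {T : Type*} [MeasurableSpace T] (μ : Measure T)
    [IsFiniteMeasure μ] {g : T → X} (hg : Measurable g) :
    Integrable (fun a => hSupp C (g a) f) μ :=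
  integrable_of_measurable_of_abs_le ((hC.measurable_hSupp f).comp hg)
    fun _ => hC.abs_hSupp_le _ f

lemma abs_hSupp_add_smul_sub_le (x : X) (f g : IPath X →ᵇ ℝ) (k : ℕ) :
    |hSupp C x (f + (k : ℝ) • g) - k * hSupp C x g| ≤ ‖f‖ := by
  refine abs_le.2 ⟨?_, ?_⟩
  · obtain ⟨Q, hQ, hmax⟩ := hC.exists_intBCF_eq_hSupp x g
    have := intBCF_le_hSupp hQ (f + (k : ℝ) • g)
    rw [intBCF_add, intBCF_smul, hmax] at this
    linarith [(abs_le.1 (abs_intBCF_le f Q)).1]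
  · obtain ⟨Q, hQ, hmax⟩ := hC.exists_intBCF_eq_hSupp x (f + (k : ℝ) • g)
    rw [← hmax, intBCF_add, intBCF_smul]
    have : (k : ℝ) * intBCF g Q ≤ k * hSupp C x g := by gcongr; exact intBCF_le_hSupp hQ g
    linarith [(abs_le.1 (abs_intBCF_le f Q)).2]

variable [PolishSpace X]

lemma tendsto_hSupp_add_smul (x : X) (f g : IPath X →ᵇ ℝ) :
    Tendsto (fun k : ℕ => hSupp C x (f + (k : ℝ) • g) - k * hSupp C x g) atTop
      (𝓝 (hSupp (_root_.argmaxOn C (intBCF g)) x f)) := by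
  have intBCF_eq (k : ℕ) :
      intBCF (f + (k : ℝ) • g) = fun P => intBCF f P + k * intBCF g P :=
    funext fun P => by rw [intBCF_add, intBCF_smul]
  simp only [hSupp, intBCF_eq]
  exact tendsto_sSup_image_add_mul (hC.isCompact x) (hC.nonempty x) (continuous_intBCF f)
    (continuous_intBCF g)

variable [BorelSpace X]

lemma mem_KsetT_argmaxOn {P R : PathLaw X} {τ : IPath X → ℝ≥0} (hτ : Measurable τ)
    (hR : R ∈ KsetT C P τ) (g : IPath X →ᵇ ℝ)
    (hg : ∫ w, hSupp C (piAt τ w) g ∂(P : Measure (IPath X)) ≤ intBCF g R) :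
    R ∈ KsetT (_root_.argmaxOn C (intBCF g)) P τ := by
  intro f
  have integrable (f : IPath X →ᵇ ℝ) :
      Integrable (fun w => hSupp C (piAt τ w) f) (P : Measure (IPath X)) :=
    hC.integrable_hSupp_comp f _ (IPath.measurable_piAt hτ)
  have hlim : Tendsto (fun k : ℕ => ∫ w, (hSupp C (piAt τ w) (f + (k : ℝ) • g)
      - k * hSupp C (piAt τ w) g) ∂(P : Measure (IPath X))) atTop
      (𝓝 (∫ w, hSupp (_root_.argmaxOn C (intBCF g)) (piAt τ w) f ∂(P : Measure (IPath X)))) :=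
    tendsto_integral_of_dominated_convergence (fun _ => ‖f‖)
      (fun k => ((integrable _).sub ((integrable g).const_mul _)).aestronglyMeasurable)
      (integrable_const _)
      (fun k => Eventually.of_forall fun w => hC.abs_hSupp_add_smul_sub_le _ f g k)
      (Eventually.of_forall fun w => hC.tendsto_hSupp_add_smul _ f g)
  refine ge_of_tendsto' hlim fun k => ?_
  rw [integral_sub (integrable _) ((integrable g).const_mul _), integral_const_mul]
  have hRk := hR (f + (k : ℝ) • g)
  rw [intBCF_add, intBCF_smul] at hRk
  have : (k : ℝ) * ∫ w, hSupp C (piAt τ w) g ∂(P : Measure (IPath X)) ≤ k * intBCF g R := by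
    gcongr
  linarith

end IsMeasurableCompactValued

variable [PolishSpace X] [MeasurableSpace X] [BorelSpace X]

lemma mem_KsetT_iInter {D : ℕ → X → Set (PathLaw X)}
    (hD : ∀ n, IsMeasurableCompactValued (D n)) (hsub : ∀ n x, D (n + 1) x ⊆ D n x)
    {P R : PathLaw X} {τ : IPath X → ℝ≥0} (hτ : Measurable τ) (hR : ∀ n, R ∈ KsetT (D n) P τ) :
    R ∈ KsetT (fun x => ⋂ n, D n x) P τ := by
  intro f
  have hlim : Tendsto (fun n => ∫ w, hSupp (D n) (piAt τ w) f ∂(P : Measure (IPath X))) atTop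
      (𝓝 (∫ w, hSupp (fun x => ⋂ n, D n x) (piAt τ w) f ∂(P : Measure (IPath X)))) :=
    tendsto_integral_of_dominated_convergence (fun _ => ‖f‖)
      (fun n => ((hD n).integrable_hSupp_comp f _
        (IPath.measurable_piAt hτ)).aestronglyMeasurable)
      (integrable_const _) (fun n => Eventually.of_forall fun w => (hD n).abs_hSupp_le _ f)
      (Eventually.of_forall fun w => tendsto_sSup_image_iInter (fun n => hsub n _)
        (fun n => (hD n).isCompact _) (fun n => (hD n).nonempty _) (continuous_intBCF f))
  exact ge_of_tendsto' hlim fun n => hR n f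

lemma mem_KsetT_of_mixture (hC : IsMeasurableCompactValued C) {s : X → PathLaw X}
    (hsC : ∀ x, s x ∈ C x) (hs : Measurable fun x => (s x : Measure (IPath X))) (P : PathLaw X)
    {τ : IPath X → ℝ≥0} (hτ : Measurable τ) {R : PathLaw X}
    (hR : ∀ f : IPath X →ᵇ ℝ,
      intBCF f R = ∫ w, intBCF f (s (piAt τ w)) ∂(P : Measure (IPath X))) :
    R ∈ KsetT C P τ := by
  intro f
  rw [hR f]
  refine integral_mono ?_ (hC.integrable_hSupp_comp f _ (IPath.measurable_piAt hτ))
    fun w => intBCF_le_hSupp (hsC _) f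
  exact integrable_of_measurable_of_abs_le
    ((measurable_intBCF hs f).comp (IPath.measurable_piAt hτ)) fun _ => abs_intBCF_le _ _

end SupportFunction

/-! ### Laplace transforms -/

section Laplace

/-- The Laplace transform `∫₀^∞ e^{-lt} u(t) dt` of a function on the half-line. -/
def laplace (l : ℝ) (u : ℝ≥0 → ℝ) : ℝ :=
  ∫ t in Ioi (0 : ℝ), Real.exp (-l * t) * u t.toNNReal

/-- The Laplace transform `∫₀^T e^{-lt} u(t) dt` truncated at time `T`. -/
def laplaceTrunc (l : ℝ) (u : ℝ≥0 → ℝ) (T : ℝ≥0) : ℝ :=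
  ∫ t in Ioc (0 : ℝ) T, Real.exp (-l * t) * u t.toNNReal

lemma exp_neg_mul_le_one {l : ℝ} (hl : 0 < l) (t : ℝ≥0) : Real.exp (-l * t) ≤ 1 := by
  rw [Real.exp_le_one_iff, neg_mul, neg_nonpos]
  positivity

lemma norm_exp_mul_le {r M : ℝ} (hr : ‖r‖ ≤ M) (s : ℝ) :
    ‖Real.exp s * r‖ ≤ Real.exp s * M := by
  rw [norm_mul, Real.norm_of_nonneg (Real.exp_pos _).le]
  gcongr

variable {l : ℝ} (hl : 0 < l) (u v : ℝ≥0 →ᵇ ℝ)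

lemma continuous_exp_mul (l : ℝ) : Continuous fun t : ℝ => Real.exp (-l * t) * u t.toNNReal := by
  fun_prop

include hl in
lemma integrableOn_exp_mul (a : ℝ) :
    IntegrableOn (fun t : ℝ => Real.exp (-l * t) * u t.toNNReal) (Ioi a) :=
  ((exp_neg_integrableOn_Ioi a hl).mul_const ‖u‖).mono'
    (continuous_exp_mul u l).aestronglyMeasurable
    (.of_forall fun _ => norm_exp_mul_le (u.norm_coe_le_norm _) _)

include hl in
lemma laplace_add : laplace l (u + v) = laplace l u + laplace l v := by
  rw [laplace, laplace, laplace,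
    ← integral_add (integrableOn_exp_mul hl u 0) (integrableOn_exp_mul hl v 0)]
  simp only [Pi.add_apply, mul_add]

include hl in
lemma laplaceTrunc_add_mul (c : ℝ) (T : ℝ≥0) :
    laplaceTrunc l (fun t => u t + c * v t) T = laplaceTrunc l u T + c * laplaceTrunc l v T := by
  have integrable_trunc (f : ℝ≥0 →ᵇ ℝ) :
      IntegrableOn (fun t : ℝ => Real.exp (-l * t) * f t.toNNReal) (Ioc 0 T) :=
    (integrableOn_exp_mul hl f 0).mono_set Ioc_subset_Ioi_self
  rw [laplaceTrunc, laplaceTrunc, laplaceTrunc, ← integral_const_mul,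
    ← integral_add (integrable_trunc u) ((integrable_trunc v).const_mul c)]
  congr! 2 with t
  ring

include hl in
lemma laplace_eq_laplaceTrunc_add (T : ℝ≥0) :
    laplace l u = laplaceTrunc l u T + Real.exp (-l * T) * laplace l fun t => u (T + t) := by
  have laplace_split : laplace l u = laplaceTrunc l u T +
      ∫ t in Ioi (T : ℝ), Real.exp (-l * t) * u t.toNNReal := by
    rw [laplace, ← Ioc_union_Ioi_eq_Ioi T.coe_nonneg,
      setIntegral_union Ioc_disjoint_Ioi_same measurableSet_Ioi
        ((integrableOn_exp_mul hl u 0).mono_set Ioc_subset_Ioi_self) (integrableOn_exp_mul hl u _),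
      laplaceTrunc]
  have preimage_Ioi : (fun t : ℝ => t + (T : ℝ)) ⁻¹' Ioi (T : ℝ) = Ioi 0 := by ext; simp
  have substitution := (measurePreserving_add_right volume (T : ℝ)).setIntegral_preimage_emb
    (measurableEmbedding_addRight (T : ℝ))
    (fun t : ℝ => Real.exp (-l * t) * u t.toNNReal) (Ioi (T : ℝ))
  rw [laplace_split, ← substitution, preimage_Ioi, laplace, ← integral_const_mul]
  congr 1
  refine setIntegral_congr_fun measurableSet_Ioi fun t (ht : 0 < t) => ?_
  rw [Real.toNNReal_add ht.le T.coe_nonneg, Real.toNNReal_coe, add_comm t.toNNReal, ← mul_assoc,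
    ← Real.exp_add]
  ring_nf

lemma continuousOn_laplace : ContinuousOn (fun l => laplace l u) (Ioi 0) := by
  refine fun l (hl : 0 < l) => ContinuousAt.continuousWithinAt ?_
  refine continuousAt_of_dominated (bound := fun t => Real.exp (-(l / 2) * t) * ‖u‖) ?_ ?_
    ((exp_neg_integrableOn_Ioi 0 (half_pos hl)).mul_const ‖u‖) ?_
  · exact .of_forall fun l => (continuous_exp_mul u l).aestronglyMeasurable
  · filter_upwards [Ioi_mem_nhds (half_lt_self hl)] with r (hr : l / 2 < r)
    filter_upwards [ae_restrict_mem measurableSet_Ioi] with t (ht : 0 < t)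
    refine (norm_exp_mul_le (u.norm_coe_le_norm _) _).trans ?_
    gcongr
  · exact .of_forall fun t => by fun_prop

/-- The function `e^{-t}`, whose powers separate the points of the half-line. -/
def expNegBCF : ℝ≥0 →ᵇ ℝ :=
  BoundedContinuousFunction.ofNormedAddCommGroup (fun t => Real.exp (-(t : ℝ))) (by fun_prop) 1
    fun t => by
      rw [Real.norm_of_nonneg (Real.exp_pos _).le]
      exact Real.exp_le_one_iff.2 (neg_nonpos.2 t.coe_nonneg)

/-- The measure `e^{-t} u(t) dt` on the half-line; it is only meaningful for `0 ≤ u`. -/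
def expDensityMeasure : Measure ℝ≥0 :=
  ((volume.restrict (Ioi (0 : ℝ))).map Real.toNNReal).withDensity
    fun t => ENNReal.ofReal (Real.exp (-(t : ℝ)) * u t)

lemma lintegral_expDensity_ne_top :
    ∫⁻ t, ENNReal.ofReal (Real.exp (-(t : ℝ)) * u t)
      ∂(volume.restrict (Ioi (0 : ℝ))).map Real.toNNReal ≠ ⊤ := by
  rw [lintegral_map (by fun_prop) measurable_real_toNNReal,
    setLIntegral_congr_fun (g := fun t => ENNReal.ofReal (Real.exp (-1 * t) * u t.toNNReal))
      measurableSet_Ioi fun t (ht : 0 < t) => by simp [ht.le]]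
  exact (integrableOn_exp_mul one_pos u 0).lintegral_lt_top.ne

instance : IsFiniteMeasure (expDensityMeasure u) :=
  isFiniteMeasure_withDensity (lintegral_expDensity_ne_top u)

lemma integral_expNegBCF_pow {u : ℝ≥0 →ᵇ ℝ} (hu : ∀ t, 0 ≤ u t) (n : ℕ) :
    ∫ t, (expNegBCF ^ n) t ∂expDensityMeasure u = laplace (n + 1) u := by
  rw [expDensityMeasure, integral_withDensity_eq_integral_toReal_smul (by fun_prop)
    (.of_forall fun _ => ENNReal.ofReal_lt_top), integral_map
    measurable_real_toNNReal.aemeasurable (Measurable.aestronglyMeasurable (by fun_prop))]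
  refine setIntegral_congr_fun measurableSet_Ioi fun t (ht : 0 < t) => ?_
  have expNegBCF_pow_apply : (expNegBCF ^ n) t.toNNReal = Real.exp (n * -t) := by
    rw [Real.exp_nat_mul]
    simp [expNegBCF, ht.le]
  simp only [expNegBCF_pow_apply, smul_eq_mul, Real.coe_toNNReal _ ht.le]
  rw [ENNReal.toReal_ofReal (mul_nonneg (Real.exp_pos _).le (hu _)), mul_right_comm,
    ← Real.exp_add]
  ring_nf

variable {u v}

lemma eq_of_laplace_eq_of_nonneg (hu : ∀ t, 0 ≤ u t) (hv : ∀ t, 0 ≤ v t)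
    (huv : ∀ l, 0 < l → laplace l u = laplace l v) : u = v := by
  have measure_eq : expDensityMeasure u = expDensityMeasure v := by
    refine ext_of_forall_mem_submonoid_integral_eq (Submonoid.powers expNegBCF) ?_ ?_
    · refine fun x y hxy => ⟨expNegBCF, Submonoid.mem_powers _, fun heq => hxy ?_⟩
      exact NNReal.coe_injective (neg_injective (Real.exp_injective heq))
    · rintro _ ⟨n, rfl⟩
      simp only [integral_expNegBCF_pow hu, integral_expNegBCF_pow hv]
      exact huv _ (by positivity)
  have density_ae_eq := (withDensity_eq_iff (by fun_prop) (by fun_prop)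
    (lintegral_expDensity_ne_top u)).1 measure_eq
  have ae_eq : (fun t : ℝ => u t.toNNReal) =ᵐ[volume.restrict (Ioi 0)] fun t => v t.toNNReal := by
    filter_upwards [ae_of_ae_map measurable_real_toNNReal.aemeasurable density_ae_eq] with t ht
    exact mul_left_cancel₀ (Real.exp_pos _).ne' <| (ENNReal.ofReal_eq_ofReal_iff
      (mul_nonneg (Real.exp_pos _).le (hu _)) (mul_nonneg (Real.exp_pos _).le (hv _))).1 ht
  have eqOn_Ici := (Measure.eqOn_open_of_ae_eq ae_eq isOpen_Ioi (by fun_prop)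
    (by fun_prop)).closure (by fun_prop) (by fun_prop)
  rw [closure_Ioi] at eqOn_Ici
  ext t
  simpa using eqOn_Ici t.coe_nonneg

lemma eq_of_laplace_eqOn {Λ : Set ℝ} (hpos : Λ ⊆ Ioi 0) (hdense : Ioi 0 ⊆ closure Λ)
    (huv : ∀ l ∈ Λ, laplace l u = laplace l v) : u = v := by
  have laplace_eq (l : ℝ) (hl : 0 < l) : laplace l u = laplace l v :=
    Set.EqOn.of_subset_closure (s := Λ) huv (continuousOn_laplace u) (continuousOn_laplace v)
      hpos hdense hl
  let c : ℝ≥0 →ᵇ ℝ := BoundedContinuousFunction.const ℝ≥0 (‖u‖ + ‖v‖)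
  have nonneg_u (t : ℝ≥0) : 0 ≤ (u + c) t := by
    have := neg_le_of_abs_le (u.norm_coe_le_norm t)
    have := norm_nonneg v
    change 0 ≤ u t + (‖u‖ + ‖v‖)
    linarith
  have nonneg_v (t : ℝ≥0) : 0 ≤ (v + c) t := by
    have := neg_le_of_abs_le (v.norm_coe_le_norm t)
    have := norm_nonneg u
    change 0 ≤ v t + (‖u‖ + ‖v‖)
    linarith
  refine add_right_cancel (eq_of_laplace_eq_of_nonneg nonneg_u nonneg_v fun l hl => ?_)
  rw [BoundedContinuousFunction.coe_add, BoundedContinuousFunction.coe_add, laplace_add hl,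
    laplace_add hl, laplace_eq l hl]

end Laplace

/-! ### Discounted functionals of paths -/

section Discounted

/-- The path `w(s + ·)`, so that `shiftAt τ w = IPath.shift (τ w) w`. -/
def IPath.shift (s : ℝ≥0) (w : IPath X) : IPath X :=
  shiftAt (fun _ => s) w

variable {l : ℝ} (hl : 0 < l) (ψ : X →ᵇ ℝ)

include hl in
lemma laplaceTrunc_comp_add_mul (χ : X →ᵇ ℝ) (c : ℝ) (T : ℝ≥0) (w : IPath X) :
    laplaceTrunc l ((fun x => ψ x + c * χ x) ∘ w) T =
      laplaceTrunc l (ψ ∘ w) T + c * laplaceTrunc l (χ ∘ w) T :=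
  laplaceTrunc_add_mul hl (ψ.compContinuous w) (χ.compContinuous w) c T

variable [PolishSpace X]

/-- The functional `w ↦ ∫₀^∞ e^{-lt} ψ(w(t)) dt`, whose mean under `P` is `ζ(P)`. -/
def discounted : IPath X →ᵇ ℝ :=
  BoundedContinuousFunction.ofNormedAddCommGroup (fun w => laplace l (ψ ∘ w))
    (continuous_of_dominated (bound := fun t => Real.exp (-l * t) * ‖ψ‖)
      (fun w => Continuous.aestronglyMeasurable (by fun_prop))
      (fun w => .of_forall fun t => norm_exp_mul_le (ψ.norm_coe_le_norm _) _)
      ((exp_neg_integrableOn_Ioi 0 hl).mul_const ‖ψ‖) (.of_forall fun t => by fun_prop))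
    (∫ t in Ioi (0 : ℝ), Real.exp (-l * t) * ‖ψ‖) fun w =>
      norm_integral_le_of_norm_le ((exp_neg_integrableOn_Ioi 0 hl).mul_const ‖ψ‖)
        (.of_forall fun t => norm_exp_mul_le (ψ.norm_coe_le_norm _) _)

lemma laplaceTrunc_eq_discounted_sub (T : ℝ≥0) (w : IPath X) :
    laplaceTrunc l (ψ ∘ w) T =
      discounted hl ψ w - Real.exp (-l * T) * discounted hl ψ (w.shift T) :=
  eq_sub_of_add_eq (laplace_eq_laplaceTrunc_add hl (ψ.compContinuous w) T).symm

lemma abs_laplaceTrunc_le (T : ℝ≥0) (w : IPath X) :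
    |laplaceTrunc l (ψ ∘ w) T| ≤ 2 * ‖discounted hl ψ‖ := by
  rw [laplaceTrunc_eq_discounted_sub hl]
  calc |discounted hl ψ w - Real.exp (-l * T) * discounted hl ψ (w.shift T)|
      ≤ |discounted hl ψ w| + |Real.exp (-l * T) * discounted hl ψ (w.shift T)| := abs_sub _ _
    _ ≤ ‖discounted hl ψ‖ + 1 * ‖discounted hl ψ‖ := by
      rw [abs_mul, abs_of_pos (Real.exp_pos _)]
      gcongr
      exacts [(discounted hl ψ).norm_coe_le_norm w, exp_neg_mul_le_one hl T,
        (discounted hl ψ).norm_coe_le_norm _]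
    _ = 2 * ‖discounted hl ψ‖ := by ring

variable [MeasurableSpace X] [BorelSpace X]

include hl in
lemma measurable_laplaceTrunc {τ : IPath X → ℝ≥0} (hτ : Measurable τ) :
    Measurable fun w : IPath X => laplaceTrunc l (ψ ∘ w) (τ w) := by
  simp only [laplaceTrunc_eq_discounted_sub hl]
  have : Measurable fun w : IPath X => discounted hl ψ (w.shift (τ w)) :=
    (discounted hl ψ).continuous.measurable.comp (IPath.measurable_shiftAt hτ)
  fun_prop

include hl in
lemma integrable_laplaceTrunc {τ : IPath X → ℝ≥0} (hτ : Measurable τ) (P : Measure (IPath X))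
    [IsFiniteMeasure P] : Integrable (fun w : IPath X => laplaceTrunc l (ψ ∘ w) (τ w)) P :=
  integrable_of_measurable_of_abs_le (measurable_laplaceTrunc hl ψ hτ) fun w =>
    abs_laplaceTrunc_le hl ψ (τ w) w

/-- The function `t ↦ E_P ψ(w(t))`. -/
def marginalMean (P : PathLaw X) : ℝ≥0 →ᵇ ℝ :=
  BoundedContinuousFunction.ofNormedAddCommGroup
    (fun t => ∫ w, ψ (w t) ∂(P : Measure (IPath X)))
    (continuous_of_dominated (bound := fun _ => ‖ψ‖)
      (fun t => Continuous.aestronglyMeasurable (by fun_prop))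
      (fun t => .of_forall fun w => ψ.norm_coe_le_norm _) (integrable_const _)
      (.of_forall fun w => by fun_prop)) ‖ψ‖
    fun t => by
      simpa using norm_integral_le_of_norm_le_const (μ := (P : Measure (IPath X)))
        (.of_forall fun w => ψ.norm_coe_le_norm (w t))

lemma intBCF_discounted (P : PathLaw X) :
    intBCF (discounted hl ψ) P = laplace l (marginalMean ψ P) := by
  have measurable_integrand :
      Measurable fun p : IPath X × ℝ => Real.exp (-l * p.2) * ψ (p.1 p.2.toNNReal) :=
    Measurable.mul (by fun_prop) <| ψ.continuous.measurable.comp <|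
      IPath.measurable_uncurry_eval.comp
        ((measurable_real_toNNReal.comp measurable_snd).prodMk measurable_fst)
  have integrable_integrand :
      Integrable (fun p : IPath X × ℝ => Real.exp (-l * p.2) * ψ (p.1 p.2.toNNReal))
        ((P : Measure (IPath X)).prod (volume.restrict (Ioi 0))) := by
    refine Integrable.mono' (g := fun p => (1 : ℝ) * (Real.exp (-l * p.2) * ‖ψ‖))
      (Integrable.mul_prod (integrable_const (1 : ℝ))
        ((exp_neg_integrableOn_Ioi 0 hl).mul_const ‖ψ‖))
      measurable_integrand.aestronglyMeasurable (.of_forall fun p => ?_)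
    rw [one_mul]
    exact norm_exp_mul_le (ψ.norm_coe_le_norm _) _
  calc intBCF (discounted hl ψ) P
      = ∫ t in Ioi (0 : ℝ), ∫ w, Real.exp (-l * t) * ψ (w t.toNNReal) ∂(P : Measure (IPath X)) :=
        integral_integral_swap integrable_integrand
    _ = laplace l (marginalMean ψ P) := by
        simp only [integral_const_mul]
        rfl

lemma integral_comp_eval_eq_of_discounted {Λ : Set ℝ} (hpos : Λ ⊆ Ioi 0)
    (hdense : Ioi 0 ⊆ closure Λ) {P Q : PathLaw X}
    (hPQ : ∀ (l) (hl : l ∈ Λ), intBCF (discounted (hpos hl) ψ) P =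
      intBCF (discounted (hpos hl) ψ) Q) (t : ℝ≥0) :
    ∫ w, ψ (w t) ∂(P : Measure (IPath X)) = ∫ w, ψ (w t) ∂(Q : Measure (IPath X)) :=
  DFunLike.congr_fun (eq_of_laplace_eqOn hpos hdense fun l hl => by
    rw [← intBCF_discounted (hpos hl), ← intBCF_discounted (hpos hl), hPQ l hl] :
      marginalMean ψ P = marginalMean ψ Q) t

end Discounted

/-! ### Krylov maps and nonnegative determining functionals -/

section KrylovMaps

/-- Data `(λ_n, φ_n)` enumerating a product `Λ × Φ`, where `Λ` is dense in the half-line and `Φ` is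
a multiplicative family of bounded continuous functions separating points. -/
structure IsSeparatingData (lam : ℕ → ℝ) (φ : ℕ → X →ᵇ ℝ) : Prop where
  pos : ∀ n, 0 < lam n
  dense : Ioi 0 ⊆ closure (range lam)
  separates : ∀ x y, x ≠ y → ∃ n, φ n x ≠ φ n y
  mul_closed : ∀ m n, ∃ k, φ k = φ m * φ n
  pairs : ∀ m n, ∃ k, lam k = lam m ∧ φ k = φ n

/-- The part of the strong Krylov property that drives the selection argument. The field
`exists_shift_eq` encodes the inclusion `K(P, τ, 𝒞) ⊆ θ_τ Γ[P, x, τ](𝒞)`. -/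
structure IsKrylovMap [MeasurableSpace X] (C : X → Set (PathLaw X)) (lam : ℕ → ℝ)
    (φ : ℕ → X →ᵇ ℝ) : Prop extends IsMeasurableCompactValued C where
  start : ∀ x, ∀ P ∈ C x, ∀ᵐ w ∂(P : Measure (IPath X)), w 0 = x
  shift_mem : ∀ x, ∀ P ∈ C x, ∀ τ : IPath X → ℝ≥0, IsStopT τ → (∀ w, 0 < τ w) →
    ∀ R, IsShiftAtOf τ P R → R ∈ KsetT C P τ
  exists_shift_eq : ∀ x, ∀ P ∈ C x, ∀ τ : IPath X → ℝ≥0, IsStopT τ → (∀ w, 0 < τ w) →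
    ∀ R ∈ KsetT C P τ, ∃ Q ∈ C x, IsShiftAtOf τ Q R ∧
      ∀ n, zetaT (lam n) (φ n) τ P ≤ zetaT (lam n) (φ n) τ Q

/-- Nonnegative rewards `ψ_n` with discount rates `l_n` such that the discounted functionals
determine the one-dimensional marginals of a path law. -/
structure IsDeterminingData [PolishSpace X] [MeasurableSpace X] (l : ℕ → ℝ) (ψ : ℕ → X →ᵇ ℝ) :
    Prop where
  pos : ∀ n, 0 < l n
  nonneg : ∀ n x, 0 ≤ ψ n x
  map_eval_eq : ∀ P Q : PathLaw X,
    (∀ n, intBCF (discounted (pos n) (ψ n)) P = intBCF (discounted (pos n) (ψ n)) Q) →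
    ∀ t, (P : Measure (IPath X)).map (fun w => w t) = (Q : Measure (IPath X)).map fun w => w t

/-- The nonnegative function `f² (1 + g / (1 + ‖g‖))`. Together with `f²` it determines `f² g`, so
that signed test functions can be traded for nonnegative ones. -/
def squarePerturb (f g : X →ᵇ ℝ) : X →ᵇ ℝ :=
  f * f + (1 + ‖g‖)⁻¹ • (f * f * g)

lemma squarePerturb_nonneg (f g : X →ᵇ ℝ) (x : X) : 0 ≤ squarePerturb f g x := by
  have norm_g_lt : (0 : ℝ) < 1 + ‖g‖ := by positivity
  have perturbation_le : -1 ≤ (1 + ‖g‖)⁻¹ * g x := by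
    rw [inv_mul_eq_div, le_div_iff₀ norm_g_lt]
    linarith [neg_le_of_abs_le (g.norm_coe_le_norm x)]
  calc 0 ≤ f x * f x * (1 + (1 + ‖g‖)⁻¹ * g x) :=
        mul_nonneg (mul_self_nonneg _) (by linarith)
    _ = squarePerturb f g x := by
        simp only [squarePerturb, coe_add, coe_mul, coe_smul, Pi.add_apply, Pi.mul_apply,
          smul_eq_mul]
        ring

section Measurable

variable [MeasurableSpace X]

lemma integral_mul_self_mul_eq_of_squarePerturb [OpensMeasurableSpace X] {μ ν : Measure X}
    [IsFiniteMeasure μ] [IsFiniteMeasure ν] {f g : X →ᵇ ℝ}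
    (hf : ∫ x, squarePerturb f 0 x ∂μ = ∫ x, squarePerturb f 0 x ∂ν)
    (hfg : ∫ x, squarePerturb f g x ∂μ = ∫ x, squarePerturb f g x ∂ν) :
    ∫ x, (f * f * g) x ∂μ = ∫ x, (f * f * g) x ∂ν := by
  have integral_squarePerturb (ρ : Measure X) [IsFiniteMeasure ρ] :
      ∫ x, squarePerturb f g x ∂ρ =
        ∫ x, squarePerturb f 0 x ∂ρ + (1 + ‖g‖)⁻¹ * ∫ x, (f * f * g) x ∂ρ := by
    rw [← integral_const_mul, ← integral_add (BoundedContinuousFunction.integrable _ _)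
      ((BoundedContinuousFunction.integrable _ _).const_mul _)]
    simp [squarePerturb]
  rw [integral_squarePerturb, integral_squarePerturb, hf] at hfg
  exact mul_left_cancel₀ (by positivity) (add_left_cancel hfg)

lemma ext_of_forall_integral_squarePerturb_eq [PolishSpace X] [BorelSpace X] {μ ν : Measure X}
    [IsProbabilityMeasure μ] [IsProbabilityMeasure ν] {φ : ℕ → X →ᵇ ℝ}
    (hsep : ∀ x y, x ≠ y → ∃ n, φ n x ≠ φ n y) (hmul : ∀ m n, ∃ k, φ k = φ m * φ n)
    (hsquare : ∀ m, ∫ x, squarePerturb (φ m) 0 x ∂μ = ∫ x, squarePerturb (φ m) 0 x ∂ν)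
    (hperturb : ∀ m n, ∫ x, squarePerturb (φ m) (φ n) x ∂μ =
      ∫ x, squarePerturb (φ m) (φ n) x ∂ν) : μ = ν := by
  let M : Submonoid (X →ᵇ ℝ) :=
    { carrier := {f | f = 1 ∨ ∃ m n, f = φ m * φ m * φ n}
      one_mem' := Or.inl rfl
      mul_mem' := by
        rintro _ _ (rfl | ⟨m, n, rfl⟩) (rfl | ⟨m', n', rfl⟩)
        · exact Or.inl (mul_one _)
        · exact Or.inr ⟨m', n', one_mul _⟩
        · exact Or.inr ⟨m, n, mul_one _⟩
        · obtain ⟨i, hi⟩ := hmul m m'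
          obtain ⟨j, hj⟩ := hmul n n'
          exact Or.inr ⟨i, j, by rw [hi, hj]; ring⟩ }
  refine ext_of_forall_mem_submonoid_integral_eq M (fun x y hxy => ?_) ?_
  · -- cubing is injective on `ℝ`, so the cubes still separate points
    obtain ⟨n, hn⟩ := hsep x y hxy
    refine ⟨φ n * φ n * φ n, Or.inr ⟨n, n, rfl⟩, fun hcube => hn ?_⟩
    refine (Odd.strictMono_pow (by decide : Odd 3)).injective ?_
    simpa only [pow_three', coe_mul, Pi.mul_apply] using hcube
  · rintro f (rfl | ⟨m, n, rfl⟩)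
    · simp
    · exact integral_mul_self_mul_eq_of_squarePerturb (hsquare m) (hperturb m n)

variable [PolishSpace X] [BorelSpace X]

lemma zetaT_add_smul {l : ℝ} (hl : 0 < l) (f g : X →ᵇ ℝ) (c : ℝ) {τ : IPath X → ℝ≥0}
    (hτ : Measurable τ) (P : PathLaw X) :
    zetaT l (f + c • g) τ P = zetaT l f τ P + c * zetaT l g τ P := by
  calc zetaT l (f + c • g) τ P
      = ∫ w, (laplaceTrunc l (f ∘ w) (τ w) + c * laplaceTrunc l (g ∘ w) (τ w))
          ∂(P : Measure (IPath X)) :=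
        integral_congr_ae (.of_forall fun w => laplaceTrunc_comp_add_mul hl f g c (τ w) w)
    _ = zetaT l f τ P + c * zetaT l g τ P := by
        rw [integral_add (integrable_laplaceTrunc hl f hτ _)
          ((integrable_laplaceTrunc hl g hτ _).const_mul c), integral_const_mul]
        rfl

lemma IsSeparatingData.zetaT_squarePerturb_le {lam : ℕ → ℝ} {φ : ℕ → X →ᵇ ℝ}
    (hφ : IsSeparatingData lam φ) {τ : IPath X → ℝ≥0} (hτ : Measurable τ) {P Q : PathLaw X}
    (hPQ : ∀ n, zetaT (lam n) (φ n) τ P ≤ zetaT (lam n) (φ n) τ Q) (k m : ℕ) (o : Option ℕ) :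
    zetaT (lam k) (squarePerturb (φ m) (o.elim 0 φ)) τ P ≤
      zetaT (lam k) (squarePerturb (φ m) (o.elim 0 φ)) τ Q := by
  have zeta_le (j : ℕ) : zetaT (lam k) (φ j) τ P ≤ zetaT (lam k) (φ j) τ Q := by
    obtain ⟨i, hik, hij⟩ := hφ.pairs k j
    simpa only [hik, hij] using hPQ i
  obtain ⟨i, hi⟩ := hφ.mul_closed m m
  cases o with
  | none => simpa [squarePerturb, ← hi] using zeta_le i
  | some n =>
    obtain ⟨j, hj⟩ := hφ.mul_closed i n
    simp only [squarePerturb, Option.elim, ← hi, ← hj, zetaT_add_smul (hφ.pos k) _ _ _ hτ]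
    gcongr <;> exact zeta_le _

lemma IsSeparatingData.map_eval_eq {lam : ℕ → ℝ} {φ : ℕ → X →ᵇ ℝ}
    (hφ : IsSeparatingData lam φ) {P Q : PathLaw X}
    (hPQ : ∀ k m (o : Option ℕ),
      intBCF (discounted (hφ.pos k) (squarePerturb (φ m) (o.elim 0 φ))) P =
      intBCF (discounted (hφ.pos k) (squarePerturb (φ m) (o.elim 0 φ))) Q) (t : ℝ≥0) :
    (P : Measure (IPath X)).map (fun w => w t) = (Q : Measure (IPath X)).map fun w => w t := by
  have (R : PathLaw X) : IsProbabilityMeasure ((R : Measure (IPath X)).map fun w => w t) :=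
    Measure.isProbabilityMeasure_map (IPath.measurable_eval t).aemeasurable
  have integral_eq (m : ℕ) (o : Option ℕ) :
      ∫ x, squarePerturb (φ m) (o.elim 0 φ) x ∂(P : Measure (IPath X)).map (fun w => w t) =
        ∫ x, squarePerturb (φ m) (o.elim 0 φ) x ∂(Q : Measure (IPath X)).map fun w => w t := by
    rw [integral_map (IPath.measurable_eval t).aemeasurable (by fun_prop),
      integral_map (IPath.measurable_eval t).aemeasurable (by fun_prop)]
    refine integral_comp_eval_eq_of_discounted _ (range_subset_iff.2 hφ.pos) hφ.dense ?_ t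
    rintro _ ⟨k, rfl⟩
    exact hPQ k m o
  exact ext_of_forall_integral_squarePerturb_eq hφ.separates hφ.mul_closed
    (fun m => integral_eq m none) fun m n => integral_eq m (some n)

lemma IsKrylovMap.exists_isDeterminingData {C : X → Set (PathLaw X)} {lam : ℕ → ℝ}
    {φ : ℕ → X →ᵇ ℝ} (hC : IsKrylovMap C lam φ) (hφ : IsSeparatingData lam φ) :
    ∃ (l : ℕ → ℝ) (ψ : ℕ → X →ᵇ ℝ), IsDeterminingData l ψ ∧ IsKrylovMap C l ψ := by
  obtain ⟨e, he⟩ := exists_surjective_nat (ℕ × ℕ × Option ℕ)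
  refine ⟨fun n => lam (e n).1, fun n => squarePerturb (φ (e n).2.1) ((e n).2.2.elim 0 φ),
    ⟨fun n => hφ.pos _, fun n => squarePerturb_nonneg _ _, fun P Q hPQ => ?_⟩,
    ⟨hC.toIsMeasurableCompactValued, hC.start, hC.shift_mem, fun x P hP τ hτ hτ0 R hR => ?_⟩⟩
  · refine hφ.map_eval_eq fun k m o => ?_
    obtain ⟨n, hn⟩ := he (k, m, o)
    simpa only [hn] using hPQ n
  · obtain ⟨Q, hQ, hQR, hzeta⟩ := hC.exists_shift_eq x P hP τ hτ hτ0 R hR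
    exact ⟨Q, hQ, hQR, fun n => hφ.zetaT_squarePerturb_le hτ.measurable hzeta _ _ _⟩

end Measurable

end KrylovMaps

/-! ### Product functions on path space -/

section ProductFunctions

@[simp] lemma IPath.shift_apply (r t : ℝ≥0) (w : IPath X) : w.shift r t = w (r + t) := rfl

lemma IPath.shift_shift (r s : ℝ≥0) (w : IPath X) : (w.shift r).shift s = w.shift (r + s) := by
  ext t
  simp only [shift_apply, add_assoc]

@[simp] lemma IPath.shift_zero (w : IPath X) : w.shift 0 = w := by
  ext t
  simp

lemma IPath.continuous_shift (r : ℝ≥0) : Continuous (IPath.shift r : IPath X → IPath X) :=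
  ContinuousMap.continuous_precomp (⟨fun t => r + t, by fun_prop⟩ : C(ℝ≥0, ℝ≥0))

/-- The function `w ↦ g(w(r)) f(θ_r w)` on path space. -/
def evalMulShift (g : X →ᵇ ℝ) (r : ℝ≥0) (f : IPath X →ᵇ ℝ) : IPath X →ᵇ ℝ :=
  g.compContinuous ⟨fun w => w r, continuous_eval_const r⟩ *
    f.compContinuous ⟨IPath.shift r, IPath.continuous_shift r⟩

@[simp] lemma evalMulShift_apply (g : X →ᵇ ℝ) (r : ℝ≥0) (f : IPath X →ᵇ ℝ) (w : IPath X) :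
    evalMulShift g r f w = g (w r) * f (w.shift r) := rfl

lemma evalMulShift_mul (g g' : X →ᵇ ℝ) {r r' : ℝ≥0} (hr : r ≤ r') (f f' : IPath X →ᵇ ℝ) :
    evalMulShift g r f * evalMulShift g' r' f' =
      evalMulShift g r (f * evalMulShift g' (r' - r) f') := by
  ext w
  simp only [coe_mul, Pi.mul_apply, evalMulShift_apply, IPath.shift_shift, IPath.shift_apply,
    add_tsub_cancel_of_le hr]
  ring

/-- Finite products `w ↦ ∏ᵢ gᵢ(w(tᵢ))` with `t₁ ≤ t₂ ≤ …`, built by prepending a factor, which is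
the form suited to the Markov property. -/
inductive IsProductFunction : (IPath X →ᵇ ℝ) → Prop
  | one : IsProductFunction 1
  | evalMulShift (g : X →ᵇ ℝ) (r : ℝ≥0) {f : IPath X →ᵇ ℝ} :
      IsProductFunction f → IsProductFunction (evalMulShift g r f)

lemma IsProductFunction.mul {f f' : IPath X →ᵇ ℝ} (hf : IsProductFunction f)
    (hf' : IsProductFunction f') : IsProductFunction (f * f') := by
  induction hf' generalizing f with
  | one => rwa [mul_one]
  | evalMulShift g' r' hf₀' ih' =>
    induction hf generalizing r' with
    | one => exact (one_mul (_root_.evalMulShift g' r' _)).symm ▸ hf₀'.evalMulShift g' r'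
    | evalMulShift g r hf₀ ih =>
      rcases le_total r r' with hr | hr
      · rw [evalMulShift_mul _ _ hr]
        exact .evalMulShift _ _ (ih _)
      · rw [mul_comm, evalMulShift_mul _ _ hr, mul_comm]
        exact .evalMulShift _ _ (ih' (hf₀.evalMulShift _ _))

lemma ext_of_forall_isProductFunction [PolishSpace X] {P Q : Measure (IPath X)}
    [IsFiniteMeasure P] [IsFiniteMeasure Q]
    (hPQ : ∀ f, IsProductFunction f → ∫ w, f w ∂P = ∫ w, f w ∂Q) : P = Q := by
  let M : Submonoid (IPath X →ᵇ ℝ) :=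
    { carrier := {f | IsProductFunction f}
      one_mem' := .one
      mul_mem' := .mul }
  refine ext_of_forall_mem_submonoid_integral_eq M (fun v w hvw => ?_) hPQ
  obtain ⟨t, ht⟩ := DFunLike.ne_iff.1 hvw
  let := TopologicalSpace.upgradeIsCompletelyMetrizable X
  have truncDist_pos : 0 < truncDist (v t) (w t) := lt_min one_pos (dist_pos.2 ht.symm)
  have truncDist_self : truncDist (v t) (v t) = 0 := by simp [truncDist]
  refine ⟨evalMulShift (truncDist (v t)) t 1, .evalMulShift _ _ .one, ?_⟩
  simpa [truncDist_self] using truncDist_pos.ne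

end ProductFunctions

/-! ### Optimal laws and the Markov property at deterministic times -/

section MarkovFamily

lemma integral_eval_zero_mul {P : Measure (IPath X)} {x : X} (hP : ∀ᵐ w ∂P, w 0 = x) (g : X → ℝ)
    (F : IPath X → ℝ) : ∫ w, g (w 0) * F w ∂P = g x * ∫ w, F w ∂P := by
  rw [← integral_const_mul]
  refine integral_congr_ae ?_
  filter_upwards [hP] with w hw
  rw [hw]

lemma intBCF_eq_of_mem_KsetT {C : X → Set (PathLaw X)} (hC : ∀ x, (C x).Nonempty)
    {P R : PathLaw X} {τ : IPath X → ℝ≥0} (hR : R ∈ KsetT C P τ) {f : IPath X →ᵇ ℝ} {v : X → ℝ}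
    (hv : ∀ y, ∀ Q ∈ C y, intBCF f Q = v y) :
    intBCF f R = ∫ w, v (piAt τ w) ∂(P : Measure (IPath X)) := by
  have hSupp_eq {g : IPath X →ᵇ ℝ} {u : X → ℝ} (hu : ∀ y, ∀ Q ∈ C y, intBCF g Q = u y) (y : X) :
      hSupp C y g = u y := by
    rw [hSupp, image_congr (hu y), (hC y).image_const, csSup_singleton]
  have intBCF_neg (Q : PathLaw X) : intBCF (-f) Q = -intBCF f Q := integral_neg _
  refine le_antisymm (by simpa only [hSupp_eq hv] using hR f) (neg_le_neg_iff.1 ?_)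
  have := hR (-f)
  simp only [hSupp_eq (u := fun y => -v y) fun y Q hQ => by rw [intBCF_neg, hv y Q hQ]] at this
  rwa [intBCF_neg, integral_neg] at this

variable [PolishSpace X] [MeasurableSpace X]

namespace IsDeterminingData

variable {l : ℕ → ℝ} {ψ : ℕ → X →ᵇ ℝ} (hψ : IsDeterminingData l ψ) (C : X → Set (PathLaw X))

/-- The total discounted reward `w ↦ ∫₀^∞ e^{-l_n t} ψ_n(w(t)) dt`. -/
def payoff (n : ℕ) : IPath X →ᵇ ℝ :=
  discounted (hψ.pos n) (ψ n)

/-- The laws in `C x` that successively maximize the means of the first `n` payoffs. -/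
abbrev optimalUpTo (n : ℕ) (x : X) : Set (PathLaw X) :=
  lexArgmax C (fun i => intBCF (hψ.payoff i)) n x

/-- The laws in `C x` that successively maximize the means of all payoffs. -/
abbrev optimal (x : X) : Set (PathLaw X) :=
  lexArgmaxAll C (fun i => intBCF (hψ.payoff i)) x

end IsDeterminingData

/-- A measurable family of path laws with `P_x(w(0) = x) = 1` which is Markov at deterministic
times: `E_x f(θ_t w) = E_x E_{w(t)} f`. Conditioning on the past is not built in. -/
structure IsMarkovFamily (s : X → PathLaw X) : Prop where
  measurable : Measurable fun x => (s x : Measure (IPath X))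
  start : ∀ x, ∀ᵐ w ∂(s x : Measure (IPath X)), w 0 = x
  markov : ∀ x t, ∀ f : IPath X →ᵇ ℝ, ∫ w, f (w.shift t) ∂(s x : Measure (IPath X)) =
    ∫ w, intBCF f (s (w t)) ∂(s x : Measure (IPath X))

lemma IsKrylovMap.isMeasurableCompactValued_optimal {C : X → Set (PathLaw X)} {l : ℕ → ℝ}
    {ψ : ℕ → X →ᵇ ℝ} (hC : IsKrylovMap C l ψ) (hψ : IsDeterminingData l ψ) :
    IsMeasurableCompactValued (hψ.optimal C) :=
  hC.toIsMeasurableCompactValued.lexArgmaxAll fun _ => continuous_intBCF _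

variable [BorelSpace X]

lemma intBCF_of_isShiftAtOf {τ : IPath X → ℝ≥0} (hτ : Measurable τ) {P R : PathLaw X}
    (hR : IsShiftAtOf τ P R) (f : IPath X →ᵇ ℝ) :
    intBCF f R = ∫ w, f (w.shift (τ w)) ∂(P : Measure (IPath X)) := by
  unfold intBCF
  rw [hR, integral_map (IPath.measurable_shiftAt hτ).aemeasurable (by fun_prop)]
  rfl

lemma exists_isShiftAtOf {τ : IPath X → ℝ≥0} (hτ : Measurable τ) (P : PathLaw X) :
    ∃ R, IsShiftAtOf τ P R :=
  ⟨P.map (IPath.measurable_shiftAt hτ).aemeasurable, rfl⟩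

lemma intBCF_discounted_eq_zetaT_add {l : ℝ} (hl : 0 < l) (ψ : X →ᵇ ℝ) (t : ℝ≥0)
    {P R : PathLaw X} (hR : IsShiftAtOf (fun _ => t) P R) :
    intBCF (discounted hl ψ) P =
      zetaT l ψ (fun _ => t) P + Real.exp (-l * t) * intBCF (discounted hl ψ) R := by
  have integrable_shift :
      Integrable (fun w : IPath X => discounted hl ψ (w.shift t)) (P : Measure (IPath X)) :=
    ((discounted hl ψ).compContinuous ⟨_, IPath.continuous_shift t⟩).integrable _
  rw [intBCF_of_isShiftAtOf measurable_const hR, ← integral_const_mul]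
  refine Eq.trans ?_ (integral_add (integrable_laplaceTrunc hl ψ (measurable_const (a := t)) _)
    (integrable_shift.const_mul _))
  exact integral_congr_ae (.of_forall fun w =>
    eq_add_of_sub_eq (laplaceTrunc_eq_discounted_sub hl ψ t w).symm)

lemma intBCF_discounted_eq_of_competitor {l : ℝ} (hl : 0 < l) (ψ : X →ᵇ ℝ) {t : ℝ≥0}
    {P Q R S : PathLaw X} (hR : IsShiftAtOf (fun _ => t) P R) (hS : IsShiftAtOf (fun _ => t) Q S)
    (hzeta : zetaT l ψ (fun _ => t) P ≤ zetaT l ψ (fun _ => t) Q)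
    (hQP : intBCF (discounted hl ψ) Q ≤ intBCF (discounted hl ψ) P)
    (hRS : intBCF (discounted hl ψ) R ≤ intBCF (discounted hl ψ) S) :
    intBCF (discounted hl ψ) Q = intBCF (discounted hl ψ) P ∧
      intBCF (discounted hl ψ) R = intBCF (discounted hl ψ) S := by
  have hexp := Real.exp_pos (-l * t)
  have hRS_exp := mul_le_mul_of_nonneg_left hRS hexp.le
  rw [intBCF_discounted_eq_zetaT_add hl ψ t hR, intBCF_discounted_eq_zetaT_add hl ψ t hS] at *
  exact ⟨by linarith, mul_left_cancel₀ hexp.ne' (by linarith)⟩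

section Optimal

variable {C : X → Set (PathLaw X)} {l : ℕ → ℝ} {ψ : ℕ → X →ᵇ ℝ} (hC : IsKrylovMap C l ψ)
  (hψ : IsDeterminingData l ψ) {x : X} {P : PathLaw X}
include hC

lemma IsKrylovMap.exists_optimal_continuation {x : X} {P : PathLaw X} (hPC : P ∈ C x) {t : ℝ≥0}
    (ht : 0 < t) :
    ∃ Q ∈ C x, (∀ n, zetaT (l n) (ψ n) (fun _ => t) P ≤ zetaT (l n) (ψ n) (fun _ => t) Q) ∧
      ∃ S, IsShiftAtOf (fun _ => t) Q S ∧ ∀ n, intBCF (hψ.payoff n) S =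
        ∫ w, hSupp (hψ.optimalUpTo C n) (w t) (hψ.payoff n) ∂(P : Measure (IPath X)) := by
  obtain ⟨s, hs_mem, hs⟩ :=
    (hC.isMeasurableCompactValued_optimal hψ).exists_measurable_selection
  have hs_meas := measurable_coe_of_isOpen_preimage hs
  have hτ : Measurable fun _ : IPath X => t := measurable_const
  obtain ⟨S, hS⟩ := exists_mixture hs_meas (P : Measure (IPath X)) (IPath.measurable_piAt hτ)
  have hSK : S ∈ KsetT C P fun _ => t :=
    mem_KsetT_of_mixture hC.toIsMeasurableCompactValued
      (fun y => lexArgmaxAll_subset (hs_mem y)) hs_meas P hτ hS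
  obtain ⟨Q, hQC, hQS, hzeta⟩ :=
    hC.exists_shift_eq x P hPC _ (isStopT_const t) (fun _ => ht) S hSK
  refine ⟨Q, hQC, hzeta, S, hQS, fun n => (hS _).trans ?_⟩
  exact integral_congr_ae (.of_forall fun w => eq_sSup_of_mem_lexArgmaxAll (hs_mem _) n)

-- The optimal law `P` is compared with a law `Q` that collects at least as much before time `t`
-- and continues optimally: neither payoff can be improved, so `P` continues optimally as well.
lemma IsKrylovMap.shift_mem_KsetT_optimal (hP : P ∈ hψ.optimal C x) {t : ℝ≥0} (ht : 0 < t)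
    {R : PathLaw X} (hR : IsShiftAtOf (fun _ => t) P R) :
    R ∈ KsetT (hψ.optimal C) P fun _ => t := by
  have hτ : Measurable fun _ : IPath X => t := measurable_const
  have hPC : P ∈ C x := lexArgmaxAll_subset hP
  have optimalUpTo_compactValued (n : ℕ) : IsMeasurableCompactValued (hψ.optimalUpTo C n) :=
    hC.toIsMeasurableCompactValued.lexArgmax (fun _ => continuous_intBCF _) n
  obtain ⟨Q, hQC, hzeta, S, hQS, hS⟩ := hC.exists_optimal_continuation hψ hPC ht
  have optimal_step (n : ℕ) :
      Q ∈ hψ.optimalUpTo C n x ∧ R ∈ KsetT (hψ.optimalUpTo C n) P fun _ => t := by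
    induction n with
    | zero => exact ⟨hQC, hC.shift_mem x P hPC _ (isStopT_const t) (fun _ => ht) R hR⟩
    | succ n ih =>
      obtain ⟨hQn, hRn⟩ := ih
      have hP_eq : intBCF (hψ.payoff n) P = hSupp (hψ.optimalUpTo C n) x (hψ.payoff n) :=
        eq_sSup_of_mem_lexArgmaxAll hP n
      have hR_le : intBCF (hψ.payoff n) R ≤ intBCF (hψ.payoff n) S :=
        (hRn (hψ.payoff n)).trans (hS n).ge
      have hQ_le : intBCF (hψ.payoff n) Q ≤ intBCF (hψ.payoff n) P :=
        (intBCF_le_hSupp hQn _).trans hP_eq.ge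
      obtain ⟨hQP, hRS⟩ :=
        intBCF_discounted_eq_of_competitor (hψ.pos n) (ψ n) hR hQS (hzeta n) hQ_le hR_le
      exact ⟨⟨hQn, hQP.trans hP_eq⟩, (optimalUpTo_compactValued n).mem_KsetT_argmaxOn hτ hRn
        _ ((hS n).symm.trans hRS.symm).le⟩
  exact mem_KsetT_iInter optimalUpTo_compactValued (lexArgmax_succ_subset C _) hτ
    fun n => (optimal_step n).2

lemma IsKrylovMap.integral_shift_eq_of_optimal {f : IPath X →ᵇ ℝ} {v : X → ℝ}
    (hv : ∀ y, ∀ Q ∈ hψ.optimal C y, intBCF f Q = v y) (hP : P ∈ hψ.optimal C x) {t : ℝ≥0}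
    (ht : 0 < t) :
    ∫ w, f (w.shift t) ∂(P : Measure (IPath X)) = ∫ w, v (w t) ∂(P : Measure (IPath X)) := by
  have hτ : Measurable fun _ : IPath X => t := measurable_const
  obtain ⟨R, hR⟩ := exists_isShiftAtOf hτ P
  rw [← intBCF_of_isShiftAtOf hτ hR]
  exact intBCF_eq_of_mem_KsetT (hC.isMeasurableCompactValued_optimal hψ).nonempty
    (hC.shift_mem_KsetT_optimal hψ hP ht hR) hv

lemma IsKrylovMap.intBCF_eq_of_optimal {s : X → PathLaw X} (hs_mem : ∀ y, s y ∈ hψ.optimal C y)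
    (hs : Measurable fun y => (s y : Measure (IPath X))) {f : IPath X →ᵇ ℝ}
    (hf : IsProductFunction f) {x : X} {P : PathLaw X} (hP : P ∈ hψ.optimal C x) :
    intBCF f P = intBCF f (s x) := by
  induction hf generalizing x P with
  | one => simp [intBCF]
  | @evalMulShift g r f _ ih =>
    have value_eq (y : X) (Q : PathLaw X) (hQ : Q ∈ hψ.optimal C y) :
        intBCF (evalMulShift g 0 f) Q = g y * intBCF f (s y) := by
      simp only [intBCF, evalMulShift_apply, IPath.shift_zero]
      rw [integral_eval_zero_mul (hC.start y Q (lexArgmaxAll_subset hQ)) g, ← intBCF, ih hQ,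
        intBCF]
    rcases eq_zero_or_pos r with rfl | hr
    · rw [value_eq x P hP, value_eq x _ (hs_mem x)]
    · have integral_eq {Q : PathLaw X} (hQ : Q ∈ hψ.optimal C x) :
          intBCF (evalMulShift g r f) Q =
            ∫ y, g y * intBCF f (s y) ∂(Q : Measure (IPath X)).map fun w => w r := by
        have measurable_value : Measurable fun y => g y * intBCF f (s y) :=
          g.continuous.measurable.mul (measurable_intBCF hs f)
        rw [integral_map (IPath.measurable_eval r).aemeasurable
          measurable_value.aestronglyMeasurable,
          ← hC.integral_shift_eq_of_optimal hψ value_eq hQ hr]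
        exact integral_congr_ae (.of_forall fun w => by simp)
      rw [integral_eq hP, integral_eq (hs_mem x), hψ.map_eval_eq P (s x) fun n => ?_]
      exact (eq_sSup_of_mem_lexArgmaxAll hP n).trans
        (eq_sSup_of_mem_lexArgmaxAll (hs_mem x) n).symm

lemma IsKrylovMap.exists_isMarkovFamily : ∃ s : X → PathLaw X, IsMarkovFamily s ∧
    (∀ x, hψ.optimal C x = {s x}) ∧ ∀ U, IsOpen U → MeasurableSet (s ⁻¹' U) := by
  obtain ⟨s, hs_mem, hs_open⟩ :=
    (hC.isMeasurableCompactValued_optimal hψ).exists_measurable_selection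
  have hs_meas := measurable_coe_of_isOpen_preimage hs_open
  have optimal_unique (y : X) (Q : PathLaw X) (hQ : Q ∈ hψ.optimal C y) : Q = s y :=
    Subtype.ext (show (Q : Measure (IPath X)) = s y from ext_of_forall_isProductFunction
      fun f hf => hC.intBCF_eq_of_optimal hψ hs_mem hs_meas hf hQ)
  have hs_start (x : X) : ∀ᵐ w ∂(s x : Measure (IPath X)), w 0 = x :=
    hC.start x (s x) (lexArgmaxAll_subset (hs_mem x))
  refine ⟨s, ⟨hs_meas, hs_start, fun x t f => ?_⟩,
    fun x => eq_singleton_iff_unique_mem.2 ⟨hs_mem x, optimal_unique x⟩, hs_open⟩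
  rcases eq_zero_or_pos t with rfl | ht
  · have intBCF_eq : (fun w : IPath X => intBCF f (s (w 0))) =ᵐ[(s x : Measure (IPath X))]
        fun _ => intBCF f (s x) := by
      filter_upwards [hs_start x] with w hw
      rw [hw]
    rw [integral_congr_ae intBCF_eq]
    simp [intBCF]
  · exact hC.integral_shift_eq_of_optimal hψ (fun y Q hQ => by rw [optimal_unique y Q hQ])
      (hs_mem x) ht

end Optimal

end MarkovFamily

/-! ### Gluing of paths and the Markov property conditionally on the past -/

section Glue

namespace IPath

open scoped Classical in
/-- The path that follows `w` up to time `t` and then continues along `v`. If the endpoints do not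
match, that is `v 0 ≠ w t`, the value is the junk value `w`. -/
def glue (w : IPath X) (t : ℝ≥0) (v : IPath X) : IPath X :=
  if h : v 0 = w t then
    ⟨fun s => if s ≤ t then w s else v (s - t),
      Continuous.if_le w.continuous (v.continuous.comp (by fun_prop)) continuous_id
        continuous_const (by rintro s rfl; simp [h])⟩
  else w

variable {w v : IPath X} {r s t : ℝ≥0}

lemma glue_of_ne (hv : v 0 ≠ w t) : w.glue t v = w :=
  dif_neg hv

lemma glue_apply_of_le (v : IPath X) (hst : s ≤ t) : w.glue t v s = w s := by
  unfold glue
  split_ifs with hv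
  · simp [hst]
  · rfl

lemma glue_apply_of_lt (hv : v 0 = w t) (hts : t < s) : w.glue t v s = v (s - t) := by
  simp [glue, hv, hts.not_ge]

lemma shift_glue (hv : v 0 = w t) : (w.glue t v).shift t = v := by
  ext s
  rw [shift_apply]
  rcases eq_zero_or_pos s with rfl | hs
  · rw [add_zero, glue_apply_of_le v le_rfl, hv]
  · rw [glue_apply_of_lt hv (lt_add_of_pos_right t hs), add_tsub_cancel_left]

lemma shift_glue_of_le (hrt : r ≤ t) :
    (w.glue t v).shift r = (w.shift r).glue (t - r) v := by
  have shift_apply_sub : w.shift r (t - r) = w t := by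
    rw [shift_apply, add_tsub_cancel_of_le hrt]
  by_cases hv : v 0 = w t
  · ext s
    rcases le_or_gt s (t - r) with hs | hs
    · have hrs : r + s ≤ t := by rwa [add_comm, ← le_tsub_iff_right hrt]
      rw [shift_apply, glue_apply_of_le v hs, glue_apply_of_le v hrs, shift_apply]
    · have hrs : t < r + s := by rwa [add_comm, ← tsub_lt_iff_right hrt]
      rw [shift_apply, glue_apply_of_lt (hv.trans shift_apply_sub.symm) hs,
        glue_apply_of_lt hv hrs, tsub_tsub_eq_add_tsub_of_le hrt, add_comm]
  · rw [glue_of_ne hv, glue_of_ne (shift_apply_sub.symm ▸ hv)]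

variable [PolishSpace X] [MeasurableSpace X] [BorelSpace X]

lemma measurable_glue_apply {α : Type*} [MeasurableSpace α] {a b : α → IPath X}
    (ha : Measurable fun p => a p s) (ha' : Measurable fun p => a p t)
    (hb : Measurable fun p => b p 0) (hb' : t < s → Measurable fun p => b p (s - t)) :
    Measurable fun p => (a p).glue t (b p) s := by
  classical
  rcases le_or_gt s t with hst | hts
  · simpa only [glue_apply_of_le _ hst] using ha
  · have glue_eq_ite : (fun p => (a p).glue t (b p) s) =
        fun p => if b p 0 = a p t then b p (s - t) else a p s := by
      ext p
      split_ifs with hv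
      · rw [glue_apply_of_lt hv hts]
      · rw [glue_of_ne hv]
    rw [glue_eq_ite]
    exact Measurable.ite (measurableSet_eq_fun hb ha') (hb' hts) ha

lemma measurable_glue (t : ℝ≥0) : Measurable fun p : IPath X × IPath X => p.1.glue t p.2 :=
  measurable_of_forall_eval fun s => measurable_glue_apply
    ((measurable_eval s).comp measurable_fst) ((measurable_eval t).comp measurable_fst)
    ((measurable_eval 0).comp measurable_snd) fun _ => (measurable_eval _).comp measurable_snd

end IPath

end Glue

section SimpleMarkov

lemma abs_integral_le_of_forall_abs_le {α : Type*} [MeasurableSpace α] {μ : Measure α}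
    [IsProbabilityMeasure μ] {F : α → ℝ} {M : ℝ} (hM : ∀ a, |F a| ≤ M) : |∫ a, F a ∂μ| ≤ M := by
  simpa using norm_integral_le_of_norm_le_const (μ := μ) (f := F) (C := M) (.of_forall hM)

variable [PolishSpace X] [MeasurableSpace X] {s : X → PathLaw X}

namespace IsMarkovFamily

/-- The kernel `w ↦ P_{g(w)}` of a Markov family started from a random point. -/
def kernelAt (hs : IsMarkovFamily s) {g : IPath X → X} (hg : Measurable g) :
    Kernel (IPath X) (IPath X) :=
  (lawKernel s hs.measurable).comap g hg

instance (hs : IsMarkovFamily s) {g : IPath X → X} (hg : Measurable g) :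
    IsMarkovKernel (hs.kernelAt hg) :=
  inferInstanceAs (IsMarkovKernel (Kernel.comap _ g hg))

variable [BorelSpace X] (hs : IsMarkovFamily s)

/-- The law of the path that follows `P_x` up to time `t` and continues with law `P_{w(t)}`. -/
def glueLaw (x : X) (t : ℝ≥0) : Measure (IPath X) :=
  ((s x : Measure (IPath X)) ⊗ₘ hs.kernelAt (IPath.measurable_eval t)).map
    fun p => p.1.glue t p.2

instance (x : X) (t : ℝ≥0) : IsProbabilityMeasure (hs.glueLaw x t) :=
  Measure.isProbabilityMeasure_map (IPath.measurable_glue t).aemeasurable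

lemma integral_glueLaw (x : X) (t : ℝ≥0) {F : IPath X → ℝ} (hF : Measurable F) {M : ℝ}
    (hM : ∀ w, |F w| ≤ M) :
    ∫ w, F w ∂hs.glueLaw x t =
      ∫ w, ∫ v, F (w.glue t v) ∂(s (w t) : Measure (IPath X)) ∂(s x : Measure (IPath X)) := by
  rw [glueLaw, integral_map (IPath.measurable_glue t).aemeasurable hF.aestronglyMeasurable]
  exact Measure.integral_compProd (integrable_of_measurable_of_abs_le
    (hF.comp (IPath.measurable_glue t)) fun _ => hM _)

include hs

lemma integral_shift (x : X) (t : ℝ≥0) {F : IPath X → ℝ} (hF : Measurable F) {M : ℝ}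
    (hM : ∀ w, |F w| ≤ M) :
    ∫ w, F (w.shift t) ∂(s x : Measure (IPath X)) =
      ∫ w, ∫ v, F v ∂(s (w t) : Measure (IPath X)) ∂(s x : Measure (IPath X)) := by
  have measurable_shift : Measurable (IPath.shift t : IPath X → IPath X) :=
    (IPath.continuous_shift t).measurable
  rw [← integral_map (f := F) measurable_shift.aemeasurable hF.aestronglyMeasurable,
    map_eq_snd_compProd (κ := hs.kernelAt (IPath.measurable_eval t)) measurable_shift
      (hs.markov x t), integral_snd_compProd _ _ hF hM]
  rfl

lemma integral_eval_mul_shift (x : X) (r : ℝ≥0) (g : X →ᵇ ℝ) {F : IPath X → ℝ}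
    (hF : Measurable F) {M : ℝ} (hM : ∀ w, |F w| ≤ M) :
    ∫ w, g (w r) * F (w.shift r) ∂(s x : Measure (IPath X)) =
      ∫ w, g (w r) * ∫ v, F v ∂(s (w r) : Measure (IPath X)) ∂(s x : Measure (IPath X)) := by
  have product_le (w : IPath X) : |g (w 0) * F w| ≤ ‖g‖ * M := by
    rw [abs_mul]
    gcongr
    exacts [g.norm_coe_le_norm _, hM w]
  have markov := hs.integral_shift x r (F := fun w => g (w 0) * F w)
    ((g.continuous.measurable.comp (IPath.measurable_eval 0)).mul hF) product_le
  simpa only [IPath.shift_apply, add_zero, integral_eval_zero_mul (hs.start _) g] using markov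

lemma measurable_integral_glue (t : ℝ≥0) {F : IPath X → ℝ} (hF : Measurable F) :
    Measurable fun w : IPath X => ∫ v, F (w.glue t v) ∂(s (w t) : Measure (IPath X)) :=
  (StronglyMeasurable.integral_kernel_prod_right' (κ := hs.kernelAt (IPath.measurable_eval t))
    (hF.comp (IPath.measurable_glue t)).stronglyMeasurable).measurable

lemma integral_evalMulShift_glueLaw_of_le {f : IPath X →ᵇ ℝ} (g : X →ᵇ ℝ) {r t : ℝ≥0}
    (hrt : r ≤ t)
    (hf : ∀ x, ∫ w, f w ∂(s x : Measure (IPath X)) = ∫ w, f w ∂hs.glueLaw x (t - r)) (x : X) :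
    ∫ w, evalMulShift g r f w ∂(s x : Measure (IPath X)) =
      ∫ w, evalMulShift g r f w ∂hs.glueLaw x t := by
  let continuation : IPath X → ℝ := fun w =>
    ∫ v, f (w.glue (t - r) v) ∂(s (w (t - r)) : Measure (IPath X))
  have integral_continuation (y : X) : ∫ w, f w ∂(s y : Measure (IPath X)) =
      ∫ w, continuation w ∂(s y : Measure (IPath X)) := by
    rw [hf y, hs.integral_glueLaw y (t - r) f.continuous.measurable f.norm_coe_le_norm]
  have eval_mul_continuation (w : IPath X) : g (w r) * continuation (w.shift r) =
      ∫ v, evalMulShift g r f (w.glue t v) ∂(s (w t) : Measure (IPath X)) := by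
    simp only [continuation, evalMulShift_apply, IPath.shift_glue_of_le hrt,
      IPath.glue_apply_of_le _ hrt, IPath.shift_apply, add_tsub_cancel_of_le hrt,
      integral_const_mul]
  calc ∫ w, evalMulShift g r f w ∂(s x : Measure (IPath X))
      = ∫ w, g (w r) * ∫ v, f v ∂(s (w r) : Measure (IPath X)) ∂(s x : Measure (IPath X)) :=
        hs.integral_eval_mul_shift x r g f.continuous.measurable f.norm_coe_le_norm
    _ = ∫ w, g (w r) * continuation (w.shift r) ∂(s x : Measure (IPath X)) := by
        simp only [integral_continuation]
        exact (hs.integral_eval_mul_shift x r g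
          (hs.measurable_integral_glue (t - r) f.continuous.measurable)
          fun w => abs_integral_le_of_forall_abs_le fun v => f.norm_coe_le_norm _).symm
    _ = ∫ w, evalMulShift g r f w ∂hs.glueLaw x t := by
        rw [hs.integral_glueLaw x t (evalMulShift g r f).continuous.measurable
          (evalMulShift g r f).norm_coe_le_norm]
        simp only [eval_mul_continuation]

lemma integral_evalMulShift_glueLaw_of_lt (f : IPath X →ᵇ ℝ) (g : X →ᵇ ℝ) {r t : ℝ≥0}
    (htr : t < r) (x : X) :
    ∫ w, evalMulShift g r f w ∂(s x : Measure (IPath X)) =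
      ∫ w, evalMulShift g r f w ∂hs.glueLaw x t := by
  have evalMulShift_shift (w : IPath X) :
      evalMulShift g r f w = evalMulShift g (r - t) f (w.shift t) := by
    simp only [evalMulShift_apply, IPath.shift_apply, IPath.shift_shift,
      add_tsub_cancel_of_le htr.le]
  rw [hs.integral_glueLaw x t (evalMulShift g r f).continuous.measurable
    (evalMulShift g r f).norm_coe_le_norm]
  simp only [evalMulShift_shift]
  rw [hs.markov x t]
  refine integral_congr_ae (.of_forall fun w => integral_congr_ae ?_)
  filter_upwards [hs.start (w t)] with v hv
  rw [IPath.shift_glue hv]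

lemma glueLaw_eq (x : X) (t : ℝ≥0) : hs.glueLaw x t = (s x : Measure (IPath X)) := by
  refine (ext_of_forall_isProductFunction fun f hf => ?_).symm
  induction hf generalizing x t with
  | one => simp
  | evalMulShift g r _ ih =>
    rcases le_or_gt r t with hrt | htr
    · exact hs.integral_evalMulShift_glueLaw_of_le g hrt (fun y => ih y (t - r)) x
    · exact hs.integral_evalMulShift_glueLaw_of_lt _ g htr x

lemma integral_eq_integral_glue (x : X) (t : ℝ≥0) {F : IPath X → ℝ} (hF : Measurable F) {M : ℝ}
    (hM : ∀ w, |F w| ≤ M) :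
    ∫ w, F w ∂(s x : Measure (IPath X)) =
      ∫ w, ∫ v, F (w.glue t v) ∂(s (w t) : Measure (IPath X)) ∂(s x : Measure (IPath X)) := by
  rw [← hs.integral_glueLaw x t hF hM, hs.glueLaw_eq]

lemma setIntegral_shift (x : X) (t : ℝ≥0) {A : Set (IPath X)} (hA : MeasurableSet[natF X t] A)
    {F : IPath X → ℝ} (hF : Measurable F) {M : ℝ} (hM : ∀ w, |F w| ≤ M) :
    ∫ w in A, F (w.shift t) ∂(s x : Measure (IPath X)) =
      ∫ w in A, ∫ v, F v ∂(s (w t) : Measure (IPath X)) ∂(s x : Measure (IPath X)) := by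
  have hA_meas : MeasurableSet A := natF_le t _ hA
  have glue_mem_iff (w v : IPath X) : w.glue t v ∈ A ↔ w ∈ A :=
    mem_iff_mem_of_measurableSet_natF hA fun r hr => IPath.glue_apply_of_le v hr
  have indicator_le (w : IPath X) : |A.indicator (fun w => F (w.shift t)) w| ≤ M :=
    (norm_indicator_le_norm_self (fun w => F (w.shift t)) w).trans (hM _)
  have measurable_shift : Measurable fun w : IPath X => F (w.shift t) :=
    hF.comp (IPath.continuous_shift t).measurable
  rw [← integral_indicator hA_meas, ← integral_indicator hA_meas,
    hs.integral_eq_integral_glue x t (measurable_shift.indicator hA_meas) indicator_le]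
  refine integral_congr_ae (.of_forall fun w => ?_)
  by_cases hw : w ∈ A
  · simp only [indicator_of_mem hw, indicator_of_mem ((glue_mem_iff w _).2 hw)]
    refine integral_congr_ae ?_
    filter_upwards [hs.start (w t)] with v hv
    rw [IPath.shift_glue hv]
  · simp [indicator_of_notMem hw, indicator_of_notMem (mt (glue_mem_iff w _).1 hw)]

end IsMarkovFamily

end SimpleMarkov

/-! ### Comparison at bounded stopping times -/

section WeightedPayoff

/-- The weights `e^{-l_i t} c_i` seen from time `t`. -/
def discountWeights (l c : ℕ → ℝ) (t : ℝ≥0) (i : ℕ) : ℝ :=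
  Real.exp (-l i * t) * c i

lemma discountWeights_nonneg (l : ℕ → ℝ) {c : ℕ → ℝ} (hc : ∀ i, 0 ≤ c i) (t : ℝ≥0) (i : ℕ) :
    0 ≤ discountWeights l c t i :=
  mul_nonneg (Real.exp_pos _).le (hc i)

lemma discountWeights_discountWeights (l c : ℕ → ℝ) (r t : ℝ≥0) :
    discountWeights l (discountWeights l c r) t = discountWeights l c (r + t) := by
  ext i
  simp only [discountWeights, NNReal.coe_add, mul_add, Real.exp_add]
  ring

/-- The weighted reward `∑_{i < n} c_i ∫₀^t e^{-l_i r} ψ_i(w(r)) dr` collected up to time `t`. -/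
def runningPayoff (l : ℕ → ℝ) (ψ : ℕ → X →ᵇ ℝ) (n : ℕ) (c : ℕ → ℝ) (t : ℝ≥0) (w : IPath X) : ℝ :=
  ∑ i ∈ Finset.range n, c i * laplaceTrunc (l i) (ψ i ∘ w) t

namespace IsDeterminingData

variable [PolishSpace X] [MeasurableSpace X] {l : ℕ → ℝ} {ψ : ℕ → X →ᵇ ℝ}
  (hψ : IsDeterminingData l ψ) (n : ℕ) (c : ℕ → ℝ) (t : ℝ≥0)

/-- The combination `∑_{i < n} c_i payoff_i` of the first `n` payoffs. -/
def weightedPayoff : IPath X →ᵇ ℝ :=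
  ∑ i ∈ Finset.range n, c i • hψ.payoff i

/-- A bound for the weighted payoff. -/
def payoffBound : ℝ :=
  ∑ i ∈ Finset.range n, |c i| * ‖hψ.payoff i‖

/-- A Lipschitz constant of the weighted payoff as a function of the discounting time. -/
def rateBound : ℝ :=
  ∑ i ∈ Finset.range n, |c i| * (l i * ‖hψ.payoff i‖)

lemma weightedPayoff_apply (w : IPath X) :
    hψ.weightedPayoff n c w = ∑ i ∈ Finset.range n, c i * hψ.payoff i w := by
  simp [weightedPayoff]

lemma intBCF_weightedPayoff (P : PathLaw X) :
    intBCF (hψ.weightedPayoff n c) P = ∑ i ∈ Finset.range n, c i * intBCF (hψ.payoff i) P := by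
  simp only [intBCF, weightedPayoff_apply, ← integral_const_mul]
  exact integral_finsetSum _ fun i _ => ((hψ.payoff i).integrable _).const_mul _

lemma weightedPayoff_eq_runningPayoff_add (w : IPath X) :
    hψ.weightedPayoff n c w = runningPayoff l ψ n c t w +
      hψ.weightedPayoff n (discountWeights l c t) (w.shift t) := by
  simp only [weightedPayoff_apply, runningPayoff, discountWeights, ← Finset.sum_add_distrib]
  refine Finset.sum_congr rfl fun i _ => ?_
  rw [laplaceTrunc_eq_discounted_sub (hψ.pos i), payoff]
  ring

include hψ in
lemma runningPayoff_add (r t : ℝ≥0) (w : IPath X) :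
    runningPayoff l ψ n c (r + t) w = runningPayoff l ψ n c r w +
      runningPayoff l ψ n (discountWeights l c r) t (w.shift r) := by
  have up_to_sum := hψ.weightedPayoff_eq_runningPayoff_add n c (r + t) w
  have up_to_r := hψ.weightedPayoff_eq_runningPayoff_add n c r w
  have from_r := hψ.weightedPayoff_eq_runningPayoff_add n (discountWeights l c r) t (w.shift r)
  rw [discountWeights_discountWeights, IPath.shift_shift] at from_r
  linarith

lemma payoffBound_discountWeights_le :
    hψ.payoffBound n (discountWeights l c t) ≤ hψ.payoffBound n c := by
  refine Finset.sum_le_sum fun i _ => mul_le_mul_of_nonneg_right ?_ (norm_nonneg _)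
  rw [discountWeights, abs_mul, abs_of_pos (Real.exp_pos _)]
  exact mul_le_of_le_one_left (abs_nonneg _) (exp_neg_mul_le_one (hψ.pos i) t)

lemma rateBound_discountWeights_le :
    hψ.rateBound n (discountWeights l c t) ≤ hψ.rateBound n c := by
  refine Finset.sum_le_sum fun i _ => mul_le_mul_of_nonneg_right ?_
    (mul_nonneg (hψ.pos i).le (norm_nonneg _))
  rw [discountWeights, abs_mul, abs_of_pos (Real.exp_pos _)]
  exact mul_le_of_le_one_left (abs_nonneg _) (exp_neg_mul_le_one (hψ.pos i) t)

lemma norm_weightedPayoff_le : ‖hψ.weightedPayoff n c‖ ≤ hψ.payoffBound n c :=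
  norm_sum_le_of_le _ fun _ _ => (norm_smul _ _).le

lemma abs_runningPayoff_le (w : IPath X) :
    |runningPayoff l ψ n c t w| ≤ 2 * hψ.payoffBound n c := by
  rw [payoffBound, Finset.mul_sum]
  refine (Finset.abs_sum_le_sum_abs _ _).trans (Finset.sum_le_sum fun i _ => ?_)
  rw [abs_mul, mul_left_comm]
  gcongr
  exact abs_laplaceTrunc_le (hψ.pos i) (ψ i) t w

lemma payoff_nonneg (i : ℕ) (w : IPath X) : 0 ≤ hψ.payoff i w :=
  setIntegral_nonneg measurableSet_Ioi fun _ _ =>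
    mul_nonneg (Real.exp_pos _).le (hψ.nonneg i _)

variable {c} (hc : ∀ i, 0 ≤ c i)
include hc

lemma weightedPayoff_discountWeights_anti {σ δ : ℝ≥0} (hσδ : σ ≤ δ) (w : IPath X) :
    hψ.weightedPayoff n (discountWeights l c δ) w ≤
      hψ.weightedPayoff n (discountWeights l c σ) w := by
  simp only [weightedPayoff_apply, discountWeights]
  refine Finset.sum_le_sum fun i _ => mul_le_mul_of_nonneg_right
    (mul_le_mul_of_nonneg_right (Real.exp_le_exp.2 ?_) (hc i)) (hψ.payoff_nonneg i w)
  exact mul_le_mul_of_nonpos_left hσδ (neg_nonpos.2 (hψ.pos i).le)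

lemma weightedPayoff_discountWeights_le_add (σ δ : ℝ≥0) (w : IPath X) :
    hψ.weightedPayoff n (discountWeights l c σ) w ≤
      hψ.weightedPayoff n (discountWeights l c δ) w + δ * hψ.rateBound n c := by
  simp only [weightedPayoff_apply, discountWeights, rateBound, Finset.mul_sum,
    ← Finset.sum_add_distrib]
  refine Finset.sum_le_sum fun i _ => ?_
  have payoff_le : hψ.payoff i w ≤ ‖hψ.payoff i‖ := (hψ.payoff i).apply_le_norm w
  have exp_sub_le : Real.exp (-l i * σ) - Real.exp (-l i * δ) ≤ l i * δ := by
    linarith [exp_neg_mul_le_one (hψ.pos i) σ, Real.add_one_le_exp (-l i * δ)]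
  have : (Real.exp (-l i * σ) - Real.exp (-l i * δ)) * (c i * hψ.payoff i w) ≤
      l i * δ * (c i * ‖hψ.payoff i‖) := by
    gcongr
    · exact mul_nonneg (hc i) (hψ.payoff_nonneg i w)
    · exact mul_nonneg (hψ.pos i).le δ.2
    · exact hc i
  rw [abs_of_nonneg (hc i)]
  linarith

end IsDeterminingData

end WeightedPayoff

section StoppingTime

variable [MeasurableSpace X] {τ : IPath X → ℝ≥0} (hτ : IsStopT τ) {ω : IPath X} {δ : ℝ≥0}
include hτ

lemma IsStopT.min_const (δ : ℝ≥0) : IsStopT fun w => min (τ w) δ := by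
  intro r
  simp only [min_le_iff, ofPred_or]
  exact (hτ r).union (.const _)

lemma IsStopT.glue_le_iff (v : IPath X) : τ (ω.glue δ v) ≤ δ ↔ τ ω ≤ δ :=
  mem_iff_mem_of_measurableSet_natF (hτ δ) (v := ω.glue δ v) (w := ω)
    fun _ hr => IPath.glue_apply_of_le v hr

lemma IsStopT.glue_sub [PolishSpace X] [BorelSpace X] (ω : IPath X) (δ : ℝ≥0) :
    IsStopT fun v => τ (ω.glue δ v) - δ := by
  intro r
  simp only [tsub_le_iff_right]
  refine measurable_natF_of_forall_eval (m := natF X r) (fun t ht => ?_) (hτ (r + δ))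
  exact @IPath.measurable_glue_apply X _ t δ _ _ _ _ (natF X r) (fun _ => ω) id measurable_const
    measurable_const (measurable_eval_natF zero_le) fun _ =>
      measurable_eval_natF (tsub_le_iff_right.2 ht)

end StoppingTime

section Comparison

variable [PolishSpace X] [MeasurableSpace X] {l : ℕ → ℝ} {ψ : ℕ → X →ᵇ ℝ}
  (hψ : IsDeterminingData l ψ) {s : X → PathLaw X} (n : ℕ) (c : ℕ → ℝ)

namespace IsDeterminingData

/-- The mean weighted payoff, given the path `w` up to time `t`, of following `w` up to time `t` and
the law `s (w t)` from then on. -/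
def stoppedValue (s : X → PathLaw X) (t : ℝ≥0) (w : IPath X) : ℝ :=
  runningPayoff l ψ n c t w + intBCF (hψ.weightedPayoff n (discountWeights l c t)) (s (w t))

lemma stoppedValue_add (r t : ℝ≥0) (w : IPath X) :
    hψ.stoppedValue n c s (r + t) w = runningPayoff l ψ n c r w +
      hψ.stoppedValue n (discountWeights l c r) s t (w.shift r) := by
  rw [stoppedValue, stoppedValue, hψ.runningPayoff_add, discountWeights_discountWeights,
    IPath.shift_apply, add_assoc]

lemma abs_stoppedValue_le (t : ℝ≥0) (w : IPath X) :
    |hψ.stoppedValue n c s t w| ≤ 3 * hψ.payoffBound n c := by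
  have running_le := hψ.abs_runningPayoff_le n c t w
  have value_le := ((abs_intBCF_le _ (s (w t))).trans (hψ.norm_weightedPayoff_le n _)).trans
    (hψ.payoffBound_discountWeights_le n c t)
  exact (abs_add_le _ _).trans (by linarith)

variable [BorelSpace X] {τ : IPath X → ℝ≥0} (hτ : Measurable τ)
include hτ

include hψ in
lemma measurable_runningPayoff : Measurable fun w => runningPayoff l ψ n c (τ w) w :=
  Finset.measurable_fun_sum _ fun i _ =>
    (measurable_laplaceTrunc (hψ.pos i) (ψ i) hτ).const_mul _

include hψ in
lemma integrable_runningPayoff (P : Measure (IPath X)) [IsFiniteMeasure P] :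
    Integrable (fun w => runningPayoff l ψ n c (τ w) w) P :=
  integrable_of_measurable_of_abs_le (hψ.measurable_runningPayoff n c hτ)
    fun w => hψ.abs_runningPayoff_le n c (τ w) w

lemma measurable_stoppedValue (hs : Measurable fun x => (s x : Measure (IPath X))) :
    Measurable fun w => hψ.stoppedValue n c s (τ w) w := by
  refine (hψ.measurable_runningPayoff n c hτ).add ?_
  simp only [intBCF_weightedPayoff, discountWeights]
  refine Finset.measurable_fun_sum _ fun i _ => ?_
  have : Measurable fun w : IPath X => intBCF (hψ.payoff i) (s (w (τ w))) :=
    (measurable_intBCF hs _).comp (IPath.measurable_piAt hτ)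
  fun_prop

lemma integrable_stoppedValue (hs : Measurable fun x => (s x : Measure (IPath X)))
    (P : Measure (IPath X)) [IsFiniteMeasure P] :
    Integrable (fun w => hψ.stoppedValue n c s (τ w) w) P :=
  integrable_of_measurable_of_abs_le (hψ.measurable_stoppedValue n c hτ hs)
    fun w => hψ.abs_stoppedValue_le n c (τ w) w

variable {c} (hc : ∀ i, 0 ≤ c i)
include hc

include hψ in
lemma integral_runningPayoff_le {P Q : PathLaw X}
    (hPQ : ∀ i, zetaT (l i) (ψ i) τ P ≤ zetaT (l i) (ψ i) τ Q) :
    ∫ w, runningPayoff l ψ n c (τ w) w ∂(P : Measure (IPath X)) ≤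
      ∫ w, runningPayoff l ψ n c (τ w) w ∂(Q : Measure (IPath X)) := by
  have integral_eq (R : PathLaw X) : ∫ w, runningPayoff l ψ n c (τ w) w ∂(R : Measure (IPath X)) =
      ∑ i ∈ Finset.range n, c i * zetaT (l i) (ψ i) τ R := by
    refine (integral_finsetSum _ fun i _ =>
      (integrable_laplaceTrunc (hψ.pos i) (ψ i) hτ (R : Measure (IPath X))).const_mul _).trans ?_
    simp only [integral_const_mul]
    rfl
  rw [integral_eq, integral_eq]
  exact Finset.sum_le_sum fun i _ => mul_le_mul_of_nonneg_left (hPQ i) (hc i)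

lemma integral_runningPayoff_add_integral_shift_le {δ : ℝ≥0} (hτδ : ∀ w, τ w ≤ δ)
    (Q : PathLaw X) :
    ∫ w, runningPayoff l ψ n c (τ w) w ∂(Q : Measure (IPath X)) +
        ∫ w, hψ.weightedPayoff n (discountWeights l c δ) (w.shift (τ w)) ∂(Q : Measure (IPath X)) ≤
      intBCF (hψ.weightedPayoff n c) Q := by
  have integrable_shift : Integrable (fun w =>
      hψ.weightedPayoff n (discountWeights l c δ) (w.shift (τ w))) (Q : Measure (IPath X)) :=
    integrable_of_measurable_of_abs_le ((hψ.weightedPayoff n _).continuous.measurable.comp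
      (IPath.measurable_shiftAt hτ)) fun _ => (hψ.weightedPayoff n _).norm_coe_le_norm _
  rw [← integral_add (hψ.integrable_runningPayoff n c hτ _) integrable_shift]
  refine integral_mono ((hψ.integrable_runningPayoff n c hτ _).add integrable_shift)
    ((hψ.weightedPayoff n c).integrable _) fun w => ?_
  rw [hψ.weightedPayoff_eq_runningPayoff_add n c (τ w) w]
  gcongr
  exact hψ.weightedPayoff_discountWeights_anti n hc (hτδ w) _

end IsDeterminingData

-- A competitor that stops at `σ` and continues with a maximizer of the payoff discounted up to
-- time `δ` is available in `C x`; discounting up to `σ ≤ δ` instead only increases its payoff.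
lemma IsKrylovMap.integral_runningPayoff_add_hSupp_le [BorelSpace X] {C : X → Set (PathLaw X)}
    (hC : IsKrylovMap C l ψ) {x : X} {P : PathLaw X} (hP : P ∈ C x) {σ : IPath X → ℝ≥0}
    (hσ : IsStopT σ) (hσ_pos : ∀ w, 0 < σ w) {δ : ℝ≥0} (hσδ : ∀ w, σ w ≤ δ) {c : ℕ → ℝ}
    (hc : ∀ i, 0 ≤ c i) :
    ∫ w, (runningPayoff l ψ n c (σ w) w +
        hSupp C (piAt σ w) (hψ.weightedPayoff n (discountWeights l c δ))) ∂(P : Measure (IPath X)) ≤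
      hSupp C x (hψ.weightedPayoff n c) := by
  let g : IPath X →ᵇ ℝ := hψ.weightedPayoff n (discountWeights l c δ)
  have hCc := hC.toIsMeasurableCompactValued
  obtain ⟨m, hm_mem, hm⟩ := (hCc.argmaxOn (continuous_intBCF g)).exists_measurable_selection
  have hm_meas := measurable_coe_of_isOpen_preimage hm
  obtain ⟨S, hS⟩ := exists_mixture hm_meas (P : Measure (IPath X))
    (IPath.measurable_piAt hσ.measurable)
  obtain ⟨Q, hQ, hQS, hzeta⟩ := hC.exists_shift_eq x P hP σ hσ hσ_pos S
    (mem_KsetT_of_mixture hCc (fun y => (hm_mem y).1) hm_meas P hσ.measurable hS)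
  have integral_hSupp : ∫ w, hSupp C (piAt σ w) g ∂(P : Measure (IPath X)) =
      ∫ w, g (w.shift (σ w)) ∂(Q : Measure (IPath X)) := by
    rw [← intBCF_of_isShiftAtOf hσ.measurable hQS, hS]
    exact integral_congr_ae (.of_forall fun w => (hm_mem (piAt σ w)).2.symm)
  rw [integral_add (hψ.integrable_runningPayoff n c hσ.measurable _)
    (hCc.integrable_hSupp_comp g _ (IPath.measurable_piAt hσ.measurable)), integral_hSupp]
  calc _ ≤ ∫ w, runningPayoff l ψ n c (σ w) w ∂(Q : Measure (IPath X)) +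
        ∫ w, g (w.shift (σ w)) ∂(Q : Measure (IPath X)) :=
        add_le_add_left (hψ.integral_runningPayoff_le n hσ.measurable hc hzeta) _
    _ ≤ intBCF (hψ.weightedPayoff n c) Q :=
        hψ.integral_runningPayoff_add_integral_shift_le n hσ.measurable hc hσδ Q
    _ ≤ hSupp C x (hψ.weightedPayoff n c) := intBCF_le_hSupp hQ _

section Discretization

variable {C : X → Set (PathLaw X)} {τ : IPath X → ℝ≥0} {δ : ℝ≥0} {c}

/-- The excess of the optimal value at time `min (τ w) δ`, discounted up to time `δ`, over the value
of following `s` from time `τ w` on. -/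
def IsDeterminingData.valueGap (C : X → Set (PathLaw X)) (s : X → PathLaw X) (c : ℕ → ℝ)
    (τ : IPath X → ℝ≥0) (δ : ℝ≥0) (w : IPath X) : ℝ :=
  runningPayoff l ψ n c (min (τ w) δ) w +
      hSupp C (w (min (τ w) δ)) (hψ.weightedPayoff n (discountWeights l c δ)) -
    hψ.stoppedValue n c s (τ w) w

lemma IsDeterminingData.neg_le_valueGap_of_le (hc : ∀ i, 0 ≤ c i) (hsC : ∀ x, s x ∈ C x)
    {w : IPath X} (hw : τ w ≤ δ) : -(δ * hψ.rateBound n c) ≤ hψ.valueGap n C s c τ δ w := by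
  have value_le : intBCF (hψ.weightedPayoff n (discountWeights l c (τ w))) (s (w (τ w))) ≤
      intBCF (hψ.weightedPayoff n (discountWeights l c δ)) (s (w (τ w))) +
        δ * hψ.rateBound n c := by
    calc _ ≤ ∫ v, (hψ.weightedPayoff n (discountWeights l c δ) v + δ * hψ.rateBound n c)
          ∂(s (w (τ w)) : Measure (IPath X)) :=
          integral_mono (BoundedContinuousFunction.integrable _ _)
            ((BoundedContinuousFunction.integrable _ _).add (integrable_const _))
            (hψ.weightedPayoff_discountWeights_le_add n hc (τ w) δ)
      _ = _ := by
          rw [integral_add (BoundedContinuousFunction.integrable _ _) (integrable_const _)]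
          simp [intBCF]
  have le_hSupp :=
    intBCF_le_hSupp (hsC (w (τ w))) (hψ.weightedPayoff n (discountWeights l c δ))
  rw [valueGap, min_eq_left hw, stoppedValue]
  linarith

lemma IsDeterminingData.valueGap_of_le {w : IPath X} (hw : δ ≤ τ w) :
    hψ.valueGap n C s c τ δ w = hSupp C (w δ) (hψ.weightedPayoff n (discountWeights l c δ)) -
      hψ.stoppedValue n (discountWeights l c δ) s (τ w - δ) (w.shift δ) := by
  have stoppedValue_eq := hψ.stoppedValue_add (s := s) n c δ (τ w - δ) w
  rw [add_tsub_cancel_of_le hw] at stoppedValue_eq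
  rw [valueGap, min_eq_right hw, stoppedValue_eq]
  ring

namespace IsKrylovMap

variable (hC : IsKrylovMap C l ψ)
include hC

lemma abs_valueGap_le (w : IPath X) :
    |hψ.valueGap n C s c τ δ w| ≤ 6 * hψ.payoffBound n c := by
  have running_le := hψ.abs_runningPayoff_le n c (min (τ w) δ) w
  have hSupp_le := ((hC.abs_hSupp_le (w (min (τ w) δ)) _).trans
    (hψ.norm_weightedPayoff_le n _)).trans (hψ.payoffBound_discountWeights_le n c δ)
  have stopped_le := hψ.abs_stoppedValue_le (s := s) n c (τ w) w
  rw [IsDeterminingData.valueGap]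
  linarith [abs_sub (runningPayoff l ψ n c (min (τ w) δ) w + hSupp C (w (min (τ w) δ))
    (hψ.weightedPayoff n (discountWeights l c δ))) (hψ.stoppedValue n c s (τ w) w),
    abs_add_le (runningPayoff l ψ n c (min (τ w) δ) w) (hSupp C (w (min (τ w) δ))
    (hψ.weightedPayoff n (discountWeights l c δ)))]

variable [BorelSpace X] (hs : IsMarkovFamily s)
include hs

lemma measurable_valueGap (hτ : Measurable τ) :
    Measurable fun w => hψ.valueGap n C s c τ δ w :=
  ((hψ.measurable_runningPayoff n c (hτ.min measurable_const)).add
    ((hC.measurable_hSupp _).comp (IPath.measurable_piAt (hτ.min measurable_const)))).sub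
    (hψ.measurable_stoppedValue n c hτ hs.measurable)

variable (hsC : ∀ x, s x ∈ C x) (hc : ∀ i, 0 ≤ c i)
include hsC hc

variable (hτ : IsStopT τ) {T : ℝ≥0} (hτT : ∀ w, τ w ≤ T + δ)
  (hT : ∀ y, ∀ σ : IPath X → ℝ≥0, IsStopT σ → (∀ w, 0 < σ w) → (∀ w, σ w ≤ T) →
    ∫ w, hψ.stoppedValue n (discountWeights l c δ) s (σ w) w ∂(s y : Measure (IPath X)) ≤
      hSupp C y (hψ.weightedPayoff n (discountWeights l c δ)) +
        δ * hψ.rateBound n (discountWeights l c δ))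

include hτ hτT hT in
lemma neg_le_integral_valueGap_glue (ω : IPath X) :
    -(δ * hψ.rateBound n c) ≤
      ∫ v, hψ.valueGap n C s c τ δ (ω.glue δ v) ∂(s (ω δ) : Measure (IPath X)) := by
  have measurable_glue : Measurable fun v : IPath X => ω.glue δ v :=
    (IPath.measurable_glue δ).comp measurable_prodMk_left
  rcases le_or_gt (τ ω) δ with hω | hω
  · have integrable_gap : Integrable (fun v => hψ.valueGap n C s c τ δ (ω.glue δ v))
        (s (ω δ) : Measure (IPath X)) :=
      integrable_of_measurable_of_abs_le
        ((hC.measurable_valueGap hψ n hs hτ.measurable).comp measurable_glue)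
        fun v => hC.abs_valueGap_le hψ n _
    simpa using integral_mono (integrable_const (-(δ * hψ.rateBound n c))) integrable_gap
      fun v => hψ.neg_le_valueGap_of_le n hc hsC ((hτ.glue_le_iff v).2 hω)
  · have lt_glue (v : IPath X) : δ < τ (ω.glue δ v) :=
      not_le.1 fun hv => hω.not_ge ((hτ.glue_le_iff v).1 hv)
    have hσ := hτ.glue_sub ω δ
    have remaining_le := hT (ω δ) _ hσ (fun v => tsub_pos_of_lt (lt_glue v))
      fun v => tsub_le_iff_right.2 (hτT _)
    have rate_le := mul_le_mul_of_nonneg_left (hψ.rateBound_discountWeights_le n c δ) δ.coe_nonneg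
    calc -(δ * hψ.rateBound n c)
        ≤ hSupp C (ω δ) (hψ.weightedPayoff n (discountWeights l c δ)) -
          ∫ v, hψ.stoppedValue n (discountWeights l c δ) s (τ (ω.glue δ v) - δ) v
            ∂(s (ω δ) : Measure (IPath X)) := by linarith
      _ = ∫ v, (hSupp C (ω δ) (hψ.weightedPayoff n (discountWeights l c δ)) -
            hψ.stoppedValue n (discountWeights l c δ) s (τ (ω.glue δ v) - δ) v)
            ∂(s (ω δ) : Measure (IPath X)) := by
          rw [integral_sub (integrable_const _)
            (hψ.integrable_stoppedValue n _ hσ.measurable hs.measurable _)]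
          simp
      _ = _ := by
          refine integral_congr_ae ?_
          filter_upwards [hs.start (ω δ)] with v hv
          rw [hψ.valueGap_of_le n (lt_glue v).le, IPath.glue_apply_of_le v le_rfl,
            IPath.shift_glue hv]

include hτ hτT hT in
lemma neg_le_integral_valueGap (x : X) :
    -(δ * hψ.rateBound n c) ≤
      ∫ w, hψ.valueGap n C s c τ δ w ∂(s x : Measure (IPath X)) := by
  have measurable_gap : Measurable fun w => hψ.valueGap n C s c τ δ w :=
    hC.measurable_valueGap hψ n hs hτ.measurable
  rw [hs.integral_eq_integral_glue x δ measurable_gap (hC.abs_valueGap_le hψ n)]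
  simpa using integral_mono (μ := (s x : Measure (IPath X)))
    (integrable_const (-(δ * hψ.rateBound n c)))
    (integrable_of_measurable_of_abs_le (hs.measurable_integral_glue δ measurable_gap)
      fun _ => abs_integral_le_of_forall_abs_le fun _ => hC.abs_valueGap_le hψ n _)
    (hC.neg_le_integral_valueGap_glue hψ n hs hsC hc hτ hτT hT)

-- Only the last of the `K` time steps costs anything, because discounting is exact at the
-- multiples of `δ`.
lemma integral_stoppedValue_le_add (K : ℕ) (hτ : IsStopT τ) (hτ_pos : ∀ w, 0 < τ w)
    (hτK : ∀ w, τ w ≤ K * δ) (x : X) :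
    ∫ w, hψ.stoppedValue n c s (τ w) w ∂(s x : Measure (IPath X)) ≤
      hSupp C x (hψ.weightedPayoff n c) + δ * hψ.rateBound n c := by
  induction K generalizing c τ x with
  | zero => simpa using (hτ_pos (.const _ x)).trans_le (hτK (.const _ x))
  | succ K ih =>
    have hδ : 0 < δ :=
      pos_of_mul_pos_right ((hτ_pos (.const _ x)).trans_le (hτK (.const _ x))) zero_le
    have hτK' (w : IPath X) : τ w ≤ K * δ + δ := by simpa [add_mul] using hτK w
    have hσ := hτ.min_const δ
    have integrable_running_add_hSupp := (hψ.integrable_runningPayoff n c hσ.measurable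
      (s x : Measure (IPath X))).add (hC.integrable_hSupp_comp
        (hψ.weightedPayoff n (discountWeights l c δ)) _ (IPath.measurable_piAt hσ.measurable))
    have one_step := hC.integral_runningPayoff_add_hSupp_le hψ n (hsC x) hσ
      (fun w => lt_min (hτ_pos w) hδ) (fun _ => min_le_right _ _) hc
    have gap_ge := hC.neg_le_integral_valueGap hψ n hs hsC hc hτ hτK'
      (fun y σ hσ hσ_pos hσK => ih (discountWeights_nonneg l hc δ) hσ hσ_pos hσK y) x
    simp only [piAt] at one_step
    have gap_eq : ∫ w, hψ.valueGap n C s c τ δ w ∂(s x : Measure (IPath X)) = _ :=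
      integral_sub integrable_running_add_hSupp
        (hψ.integrable_stoppedValue n c hτ.measurable hs.measurable _)
    linarith

lemma integral_stoppedValue_le (hτ : IsStopT τ) (hτ_pos : ∀ w, 0 < τ w) {T : ℝ≥0}
    (hτT : ∀ w, τ w ≤ T) (x : X) :
    ∫ w, hψ.stoppedValue n c s (τ w) w ∂(s x : Measure (IPath X)) ≤
      hSupp C x (hψ.weightedPayoff n c) := by
  have step_tendsto_zero :
      Tendsto (fun K : ℕ => (T : ℝ) / ((K : ℝ) + 1) * hψ.rateBound n c) atTop (𝓝 0) := by
    simpa [div_eq_mul_inv] using ((tendsto_one_div_add_atTop_nhds_zero_nat (𝕜 := ℝ)).const_mul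
      (T : ℝ)).mul_const (hψ.rateBound n c)
  refine ge_of_tendsto' (by simpa using step_tendsto_zero.const_add _) fun K => ?_
  refine (hC.integral_stoppedValue_le_add hψ n hs hsC hc (δ := T / (K + 1)) (K + 1) hτ hτ_pos
    (fun w => (hτT w).trans_eq ?_) x).trans_eq (by simp)
  rw [Nat.cast_succ, mul_div_cancel₀ _ (by positivity)]

end IsKrylovMap

end Discretization

end Comparison

/-! ### The strong Markov property at positive bounded stopping times -/

section PastSigmaAlgebra

variable [MeasurableSpace X] {τ : IPath X → ℝ≥0} {A : Set (IPath X)} {T : ℝ≥0}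

/-- The σ-algebra `ℱ_τ` of the past of a stopping time. -/
abbrev IsStopT.past (hτ : IsStopT τ) : MeasurableSpace (IPath X) where
  MeasurableSet' := MemFstopT τ
  measurableSet_empty := ⟨.empty, fun _ => by simp⟩
  measurableSet_compl A hA := by
    refine ⟨hA.1.compl, fun r => ?_⟩
    rw [inter_comm, ← sdiff_eq, ← sdiff_inter_self_eq_sdiff]
    exact (hτ r).diff (hA.2 r)
  measurableSet_iUnion A hA := by
    refine ⟨.iUnion fun n => (hA n).1, fun r => ?_⟩
    rw [iUnion_inter]
    exact .iUnion fun n => (hA n).2 r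

lemma IsStopT.past_le (hτ : IsStopT τ) : hτ.past ≤ (inferInstance : MeasurableSpace (IPath X)) :=
  fun _ hA => hA.1

lemma IsStopT.measurable_past [BorelSpace X] (hτ : IsStopT τ) :
    Measurable[hτ.past] τ := by
  refine @measurable_of_Iic _ _ _ _ _ hτ.past _ _ _ _ fun u => ⟨hτ.measurable measurableSet_Iic,
    fun r => ?_⟩
  have : τ ⁻¹' Iic u ∩ {w | τ w ≤ r} = {w | τ w ≤ min u r} := by
    ext w
    simp
  rw [this]
  exact natF_mono (min_le_right u r) _ (hτ (min u r))

namespace MemFstopT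

variable (hA : MemFstopT τ A) (hAT : ∀ w ∈ A, τ w ≤ T)
include hA hAT

lemma measurableSet_natF : MeasurableSet[natF X T] A :=
  inter_eq_left.2 hAT ▸ hA.2 T

lemma isStopT_piecewise [DecidablePred (· ∈ A)] : IsStopT (A.piecewise τ fun _ => T) := by
  intro r
  have level_eq : {w | A.piecewise τ (fun _ => T) w ≤ r} =
      A ∩ {w | τ w ≤ r} ∪ Aᶜ ∩ {_w | T ≤ r} := by
    ext w
    by_cases hw : w ∈ A <;> simp [hw]
  rw [level_eq]
  refine (hA.2 r).union ?_
  by_cases hTr : T ≤ r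
  · simpa [hTr] using natF_mono hTr _ (hA.measurableSet_natF hAT).compl
  · simp [hTr]

end MemFstopT

end PastSigmaAlgebra

section Faces

variable [PolishSpace X] [MeasurableSpace X] {C : X → Set (PathLaw X)}

lemma sum_range_succ_update {M : Type*} [AddCommMonoid M] (n : ℕ) (c : ℕ → ℝ) (k : ℝ)
    (F : ℕ → ℝ → M) : ∑ i ∈ Finset.range (n + 1), F i (Function.update c n k i) =
      ∑ i ∈ Finset.range n, F i (c i) + F n k := by
  rw [Finset.sum_range_succ, Function.update_self]
  congr 1
  refine Finset.sum_congr rfl fun i hi => ?_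
  rw [Function.update_of_ne (Finset.mem_range.1 hi).ne]

lemma IsMeasurableCompactValued.le_hSupp_lexArgmax (hC : IsMeasurableCompactValued C) (x : X)
    (g : ℕ → IPath X →ᵇ ℝ) (n : ℕ) {f : IPath X →ᵇ ℝ} {a : ℝ}
    (h : ∀ c : ℕ → ℝ, (∀ i, 0 ≤ c i) →
      a + ∑ i ∈ Finset.range n, c i * hSupp (_root_.lexArgmax C (fun i => intBCF (g i)) i) x (g i) ≤
        hSupp C x (f + ∑ i ∈ Finset.range n, c i • g i)) :
    a ≤ hSupp (_root_.lexArgmax C (fun i => intBCF (g i)) n) x f := by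
  induction n generalizing f a with
  | zero => simpa [_root_.lexArgmax] using h 0 fun _ => le_rfl
  | succ n ih =>
    have hCn := hC.lexArgmax (fun i => continuous_intBCF (g i)) n
    refine ge_of_tendsto' (hCn.tendsto_hSupp_add_smul x f (g n)) fun k => le_sub_iff_add_le.2 ?_
    refine ih fun c hc => ?_
    have hck := h (Function.update c n k) fun i => by
      by_cases hi : i = n
      · simp [hi]
      · simpa [hi] using hc i
    rw [sum_range_succ_update n c k fun i r => r * _,
      sum_range_succ_update n c k fun i r => r • g i, ← add_assoc] at hck
    rw [add_right_comm, add_right_comm f]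
    simpa only [add_assoc] using hck

end Faces

section MarkovDefect

lemma integral_mul_nonneg_of_forall_setIntegral_nonneg {Ω : Type*} {m m₀ : MeasurableSpace Ω}
    (hm : m ≤ m₀) {μ : Measure Ω} [IsFiniteMeasure μ] {g Y : Ω → ℝ} (hg : Measurable[m] g)
    (hg_nonneg : 0 ≤ g) (hY : Integrable Y μ) (hgY : Integrable (g * Y) μ)
    (hY_nonneg : ∀ A, MeasurableSet[m] A → 0 ≤ ∫ ω in A, Y ω ∂μ) :
    0 ≤ ∫ ω, (g * Y) ω ∂μ := by
  have condExp_nonneg : 0 ≤ᵐ[μ.trim hm] μ[Y|m] := by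
    refine ae_nonneg_of_forall_setIntegral_nonneg
      (integrable_condExp.trim hm stronglyMeasurable_condExp) fun A hA _ => ?_
    rw [← setIntegral_trim hm stronglyMeasurable_condExp hA, setIntegral_condExp hm hY hA]
    exact hY_nonneg A hA
  rw [← integral_condExp hm]
  refine integral_nonneg_of_ae ?_
  filter_upwards [condExp_mul_of_stronglyMeasurable_left hg.stronglyMeasurable hgY hY,
    ae_of_ae_trim hm condExp_nonneg] with ω pull_out nonneg
  rw [pull_out]
  exact mul_nonneg (hg_nonneg ω) nonneg

/-- The difference between `f` of the path after time `t` and the mean of `f` under the law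
`s (w t)` predicted by the Markov property. -/
def markovDefect (s : X → PathLaw X) (f : IPath X →ᵇ ℝ) (t : ℝ≥0) (w : IPath X) : ℝ :=
  f (w.shift t) - intBCF f (s (w t))

variable {s : X → PathLaw X} (f : IPath X →ᵇ ℝ) {τ : IPath X → ℝ≥0}

lemma abs_markovDefect_le (t : ℝ≥0) (w : IPath X) : |markovDefect s f t w| ≤ 2 * ‖f‖ := by
  have shift_le : |f (w.shift t)| ≤ ‖f‖ := f.norm_coe_le_norm _
  have mean_le := abs_intBCF_le f (s (w t))
  exact (abs_sub _ _).trans (by linarith)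

variable [PolishSpace X] [MeasurableSpace X] [BorelSpace X]

section Integrability

variable (hs : Measurable fun x => (s x : Measure (IPath X))) (hτ : Measurable τ)
include hs hτ

lemma measurable_markovDefect : Measurable fun w => markovDefect s f (τ w) w :=
  (f.continuous.measurable.comp (IPath.measurable_shiftAt hτ)).sub
    ((measurable_intBCF hs f).comp (IPath.measurable_piAt hτ))

lemma integrable_markovDefect (P : Measure (IPath X)) [IsFiniteMeasure P] :
    Integrable (fun w => markovDefect s f (τ w) w) P :=
  integrable_of_measurable_of_abs_le (measurable_markovDefect f hs hτ)
    fun w => abs_markovDefect_le f (τ w) w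

lemma integral_markovDefect (P : Measure (IPath X)) [IsFiniteMeasure P] :
    ∫ w, markovDefect s f (τ w) w ∂P =
      ∫ w, f (w.shift (τ w)) ∂P - ∫ w, intBCF f (s (piAt τ w)) ∂P :=
  integral_sub
    (integrable_of_measurable_of_abs_le
      (f.continuous.measurable.comp (IPath.measurable_shiftAt hτ)) fun _ => f.norm_coe_le_norm _)
    (integrable_of_measurable_of_abs_le
      ((measurable_intBCF hs f).comp (IPath.measurable_piAt hτ)) fun _ => abs_intBCF_le _ _)

end Integrability

lemma IsMarkovFamily.setIntegral_markovDefect (hs : IsMarkovFamily s) (x : X) (t : ℝ≥0)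
    {A : Set (IPath X)} (hA : MeasurableSet[natF X t] A) :
    ∫ w in A, markovDefect s f t w ∂(s x : Measure (IPath X)) = 0 := by
  rw [integral_markovDefect f hs.measurable (τ := fun _ => t) measurable_const, sub_eq_zero]
  exact hs.setIntegral_shift x t hA f.continuous.measurable f.norm_coe_le_norm

end MarkovDefect

section DiscountedDefect

variable [PolishSpace X] [MeasurableSpace X] {l : ℕ → ℝ} {ψ : ℕ → X →ᵇ ℝ}
  (hψ : IsDeterminingData l ψ) {s : X → PathLaw X} {τ : IPath X → ℝ≥0}

namespace IsDeterminingData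

/-- The Markov defect of the `i`-th payoff, discounted to time `0`. -/
def discountedDefect (s : X → PathLaw X) (i : ℕ) (t : ℝ≥0) (w : IPath X) : ℝ :=
  Real.exp (-l i * t) * markovDefect s (hψ.payoff i) t w

lemma stoppedValue_eq_sum (n : ℕ) (c : ℕ → ℝ) (t : ℝ≥0) (w : IPath X) :
    hψ.stoppedValue n c s t w =
      ∑ i ∈ Finset.range n, c i * (hψ.payoff i w - hψ.discountedDefect s i t w) := by
  simp only [stoppedValue, runningPayoff, intBCF_weightedPayoff, discountWeights, discountedDefect,
    markovDefect, ← Finset.sum_add_distrib]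
  refine Finset.sum_congr rfl fun i _ => ?_
  rw [laplaceTrunc_eq_discounted_sub (hψ.pos i), payoff]
  ring

variable [BorelSpace X] (hs : Measurable fun x => (s x : Measure (IPath X))) (hτ : Measurable τ)
include hs hτ

lemma integrable_discountedDefect (i : ℕ) (P : Measure (IPath X)) [IsFiniteMeasure P] :
    Integrable (fun w => hψ.discountedDefect s i (τ w) w) P := by
  refine (integrable_markovDefect (hψ.payoff i) hs hτ P).bdd_mul (c := 1) (by fun_prop)
    (.of_forall fun w => ?_)
  rw [Real.norm_of_nonneg (Real.exp_pos _).le]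
  exact exp_neg_mul_le_one (hψ.pos i) (τ w)

lemma integral_stoppedValue (n : ℕ) (c : ℕ → ℝ) (P : PathLaw X) :
    ∫ w, hψ.stoppedValue n c s (τ w) w ∂(P : Measure (IPath X)) =
      ∑ i ∈ Finset.range n, c i * (intBCF (hψ.payoff i) P -
        ∫ w, hψ.discountedDefect s i (τ w) w ∂(P : Measure (IPath X))) := by
  have integrable_payoff (i : ℕ) := (hψ.payoff i).integrable (P : Measure (IPath X))
  have integrable_defect (i : ℕ) :=
    hψ.integrable_discountedDefect hs hτ i (P : Measure (IPath X))
  simp only [stoppedValue_eq_sum]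
  refine (integral_finsetSum _ fun i _ =>
    ((integrable_payoff i).sub (integrable_defect i)).const_mul (c i)).trans ?_
  refine Finset.sum_congr rfl fun i _ => ?_
  rw [integral_const_mul, integral_sub' (integrable_payoff i) (integrable_defect i), intBCF]

end IsDeterminingData

variable [BorelSpace X]

lemma IsMarkovFamily.integral_discountedDefect_piecewise (hs : IsMarkovFamily s) (hτ : IsStopT τ)
    {A : Set (IPath X)} [DecidablePred (· ∈ A)] (hA : MemFstopT τ A) {T : ℝ≥0}
    (hAT : ∀ w ∈ A, τ w ≤ T) (x : X) (i : ℕ) :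
    ∫ w, hψ.discountedDefect s i (A.piecewise τ (fun _ => T) w) w ∂(s x : Measure (IPath X)) =
      ∫ w in A, hψ.discountedDefect s i (τ w) w ∂(s x : Measure (IPath X)) := by
  have defect_const_eq_zero :
      ∫ w in Aᶜ, hψ.discountedDefect s i T w ∂(s x : Measure (IPath X)) = 0 := by
    simp only [IsDeterminingData.discountedDefect]
    rw [integral_const_mul, hs.setIntegral_markovDefect _ x T (hA.measurableSet_natF hAT).compl,
      mul_zero]
  have defect_piecewise (w : IPath X) :
      hψ.discountedDefect s i (A.piecewise τ (fun _ => T) w) w =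
        A.piecewise (fun w => hψ.discountedDefect s i (τ w) w)
          (fun w => hψ.discountedDefect s i T w) w := by
    by_cases hw : w ∈ A <;> simp [hw]
  simp only [defect_piecewise]
  rw [integral_piecewise hA.1 (hψ.integrable_discountedDefect hs.measurable hτ.measurable i _)
    (hψ.integrable_discountedDefect hs.measurable (τ := fun _ => T) measurable_const i _),
    defect_const_eq_zero, add_zero]

end DiscountedDefect

section OptimalSelection

variable [PolishSpace X] [MeasurableSpace X] [BorelSpace X] {l : ℕ → ℝ} {ψ : ℕ → X →ᵇ ℝ}
  {C : X → Set (PathLaw X)} {s : X → PathLaw X} {τ : IPath X → ℝ≥0} {T : ℝ≥0}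

namespace IsKrylovMap

variable (hC : IsKrylovMap C l ψ) (hψ : IsDeterminingData l ψ) (hs : IsMarkovFamily s)
  (hs_opt : ∀ x, s x ∈ hψ.optimal C x)
include hC hs hs_opt

section

variable (hτ : IsStopT τ) (hτ_pos : ∀ w, 0 < τ w) (hτT : ∀ w, τ w ≤ T)
include hτ hτ_pos hτT

lemma integral_discountedDefect_nonneg (x : X) {n : ℕ}
    (h : ∀ i < n, ∫ w, hψ.discountedDefect s i (τ w) w ∂(s x : Measure (IPath X)) = 0) :
    0 ≤ ∫ w, hψ.discountedDefect s n (τ w) w ∂(s x : Measure (IPath X)) := by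
  have payoff_eq_hSupp (i : ℕ) :
      intBCF (hψ.payoff i) (s x) = hSupp (hψ.optimalUpTo C i) x (hψ.payoff i) :=
    eq_sSup_of_mem_lexArgmaxAll (hs_opt x) i
  suffices intBCF (hψ.payoff n) (s x) -
      ∫ w, hψ.discountedDefect s n (τ w) w ∂(s x : Measure (IPath X)) ≤
        hSupp (hψ.optimalUpTo C n) x (hψ.payoff n) by
    linarith [payoff_eq_hSupp n]
  refine hC.le_hSupp_lexArgmax x hψ.payoff n fun c hc => ?_
  have compare := hC.integral_stoppedValue_le hψ (n + 1) hs
    (fun y => lexArgmaxAll_subset (hs_opt y)) (c := Function.update c n 1)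
    (fun i => by by_cases hi : i = n <;> simp [hi, hc i]) hτ hτ_pos hτT x
  rw [hψ.integral_stoppedValue hs.measurable hτ.measurable,
    sum_range_succ_update n c 1 fun i r => r * _, IsDeterminingData.weightedPayoff,
    sum_range_succ_update n c 1 fun i r => r • hψ.payoff i, one_mul, one_smul, add_comm,
    add_comm _ (hψ.payoff n)] at compare
  refine le_of_eq_of_le ?_ compare
  congr 1
  refine Finset.sum_congr rfl fun i hi => ?_
  rw [h i (Finset.mem_range.1 hi), sub_zero, payoff_eq_hSupp]

variable {x : X} {n : ℕ}
  (h_vanish : ∀ σ : IPath X → ℝ≥0, IsStopT σ → (∀ w, 0 < σ w) → (∀ w, σ w ≤ T) → ∀ i < n,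
    ∫ w, hψ.discountedDefect s i (σ w) w ∂(s x : Measure (IPath X)) = 0)
include h_vanish

lemma setIntegral_discountedDefect_nonneg {A : Set (IPath X)} (hA : MemFstopT τ A) :
    0 ≤ ∫ w in A, hψ.discountedDefect s n (τ w) w ∂(s x : Measure (IPath X)) := by
  classical
  have hAT : ∀ w ∈ A, τ w ≤ T := fun w _ => hτT w
  have hσ := hA.isStopT_piecewise hAT
  have hσ_pos (w : IPath X) : 0 < A.piecewise τ (fun _ => T) w := by
    by_cases hw : w ∈ A
    · simpa [hw] using hτ_pos w
    · simpa [hw] using (hτ_pos w).trans_le (hτT w)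
  have hσT : ∀ w, A.piecewise τ (fun _ => T) w ≤ T := piecewise_le hAT fun _ _ => le_rfl
  rw [← hs.integral_discountedDefect_piecewise hψ hτ hA hAT x n]
  exact hC.integral_discountedDefect_nonneg hψ hs hs_opt hσ hσ_pos hσT x (h_vanish _ hσ hσ_pos hσT)

-- Multiplication by the `ℱ_τ`-measurable factor `e^{l_n τ} - 1 ≥ 0` removes the discount.
lemma integral_discountedDefect_le_integral_markovDefect :
    ∫ w, hψ.discountedDefect s n (τ w) w ∂(s x : Measure (IPath X)) ≤
      ∫ w, markovDefect s (hψ.payoff n) (τ w) w ∂(s x : Measure (IPath X)) := by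
  let D : IPath X → ℝ := fun w => hψ.discountedDefect s n (τ w) w
  let M : IPath X → ℝ := fun w => markovDefect s (hψ.payoff n) (τ w) w
  let g : IPath X → ℝ := fun w => Real.exp (l n * τ w) - 1
  have mul_eq : g * D = M - D := by
    ext w
    have exp_mul_exp : Real.exp (l n * τ w) * Real.exp (-l n * τ w) = 1 := by
      rw [← Real.exp_add]
      simp
    simp only [g, D, M, Pi.mul_apply, Pi.sub_apply, IsDeterminingData.discountedDefect]
    linear_combination markovDefect s (hψ.payoff n) (τ w) w * exp_mul_exp
  have integrable_D : Integrable D (s x : Measure (IPath X)) :=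
    hψ.integrable_discountedDefect hs.measurable hτ.measurable n _
  have integrable_M : Integrable M (s x : Measure (IPath X)) :=
    integrable_markovDefect (hψ.payoff n) hs.measurable hτ.measurable _
  have measurable_g : Measurable[hτ.past] g :=
    (measurable_subtype_coe.comp hτ.measurable_past).const_mul (l n) |>.exp.sub_const 1
  have g_nonneg : 0 ≤ g := fun w =>
    sub_nonneg.2 (Real.one_le_exp (mul_nonneg (hψ.pos n).le (τ w).coe_nonneg))
  have mul_nonneg := integral_mul_nonneg_of_forall_setIntegral_nonneg hτ.past_le measurable_g
    g_nonneg integrable_D (mul_eq ▸ integrable_M.sub integrable_D) fun A hA =>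
      hC.setIntegral_discountedDefect_nonneg hψ hs hs_opt hτ hτ_pos hτT h_vanish hA
  rwa [mul_eq, integral_sub' integrable_M integrable_D, sub_nonneg] at mul_nonneg

lemma integral_discountedDefect_eq_zero_and_mem_KsetT_succ {R : PathLaw X}
    (hR : IsShiftAtOf τ (s x) R) (hRn : R ∈ KsetT (hψ.optimalUpTo C n) (s x) τ) :
    ∫ w, hψ.discountedDefect s n (τ w) w ∂(s x : Measure (IPath X)) = 0 ∧
      R ∈ KsetT (hψ.optimalUpTo C (n + 1)) (s x) τ := by
  have payoff_eq_hSupp (y : X) :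
      intBCF (hψ.payoff n) (s y) = hSupp (hψ.optimalUpTo C n) y (hψ.payoff n) :=
    eq_sSup_of_mem_lexArgmaxAll (hs_opt y) n
  have defect_nonneg := hC.integral_discountedDefect_nonneg hψ hs hs_opt hτ hτ_pos hτT x
    (h_vanish τ hτ hτ_pos hτT)
  have defect_le := hC.integral_discountedDefect_le_integral_markovDefect hψ hs hs_opt hτ hτ_pos hτT
    h_vanish
  have markovDefect_eq := integral_markovDefect (hψ.payoff n) hs.measurable hτ.measurable
    (s x : Measure (IPath X))
  have hR_le := hRn (hψ.payoff n)
  simp only [payoff_eq_hSupp] at markovDefect_eq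
  rw [← intBCF_of_isShiftAtOf hτ.measurable hR] at markovDefect_eq
  exact ⟨by linarith, (hC.lexArgmax (fun _ => continuous_intBCF _) n).mem_KsetT_argmaxOn
    hτ.measurable hRn (hψ.payoff n) (by linarith)⟩

end

lemma integral_discountedDefect_eq_zero_and_mem_KsetT (x : X) (n : ℕ) (hτ : IsStopT τ)
    (hτ_pos : ∀ w, 0 < τ w) (hτT : ∀ w, τ w ≤ T) {R : PathLaw X} (hR : IsShiftAtOf τ (s x) R) :
    (∀ i < n, ∫ w, hψ.discountedDefect s i (τ w) w ∂(s x : Measure (IPath X)) = 0) ∧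
      R ∈ KsetT (hψ.optimalUpTo C n) (s x) τ := by
  induction n generalizing τ R with
  | zero =>
    exact ⟨by simp, hC.shift_mem x (s x) (lexArgmaxAll_subset (hs_opt x)) τ hτ hτ_pos R hR⟩
  | succ n ih =>
    have vanish (σ : IPath X → ℝ≥0) (hσ : IsStopT σ) (hσ_pos : ∀ w, 0 < σ w) (hσT : ∀ w, σ w ≤ T) :
        ∀ i < n, ∫ w, hψ.discountedDefect s i (σ w) w ∂(s x : Measure (IPath X)) = 0 :=
      (ih hσ hσ_pos hσT (exists_isShiftAtOf hσ.measurable (s x)).choose_spec).1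
    obtain ⟨defect_eq, hR_succ⟩ := hC.integral_discountedDefect_eq_zero_and_mem_KsetT_succ hψ hs
      hs_opt hτ hτ_pos hτT vanish hR (ih hτ hτ_pos hτT hR).2
    refine ⟨fun i hi => ?_, hR_succ⟩
    rcases Nat.lt_succ_iff_lt_or_eq.1 hi with hi | rfl
    exacts [vanish τ hτ hτ_pos hτT i hi, defect_eq]

end IsKrylovMap

lemma IsKrylovMap.integral_shift_stopping (hC : IsKrylovMap C l ψ) (hψ : IsDeterminingData l ψ)
    (hs : IsMarkovFamily s) (hs_opt : ∀ x, hψ.optimal C x = {s x}) (x : X) (hτ : IsStopT τ)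
    (hτ_pos : ∀ w, 0 < τ w) (hτT : ∀ w, τ w ≤ T) (f : IPath X →ᵇ ℝ) :
    ∫ w, f (w.shift (τ w)) ∂(s x : Measure (IPath X)) =
      ∫ w, intBCF f (s (piAt τ w)) ∂(s x : Measure (IPath X)) := by
  obtain ⟨R, hR⟩ := exists_isShiftAtOf hτ.measurable (s x)
  have hRn (n : ℕ) : R ∈ KsetT (hψ.optimalUpTo C n) (s x) τ :=
    (hC.integral_discountedDefect_eq_zero_and_mem_KsetT hψ hs (fun y => (hs_opt y).symm ▸ rfl) x n
      hτ hτ_pos hτT hR).2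
  have hR_optimal : R ∈ KsetT (hψ.optimal C) (s x) τ :=
    mem_KsetT_iInter (D := hψ.optimalUpTo C)
      (fun n => hC.lexArgmax (fun _ => continuous_intBCF _) n)
      (fun n y => lexArgmax_succ_subset C _ n y) hτ.measurable hRn
  rw [← intBCF_of_isShiftAtOf hτ.measurable hR]
  refine intBCF_eq_of_mem_KsetT (v := fun y => intBCF f (s y))
    (hC.isMeasurableCompactValued_optimal hψ).nonempty hR_optimal fun y Q hQ => ?_
  rw [hs_opt y] at hQ
  rw [mem_singleton_iff.1 hQ]

end OptimalSelection

/-! ### Conditioning on the past of a stopping time -/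

section Regeneration

/-- The law `P` restarts with law `s (w (τ w))` at time `τ` on the event `A`:
`P(A ∩ θ_τ⁻¹ B) = ∫_A P_{π_τ(w)}(B) P(dw)`. -/
def RegeneratesOn (s : X → PathLaw X) (P : Measure (IPath X)) (τ : IPath X → ℝ≥0)
    (A : Set (IPath X)) : Prop :=
  ∀ B, MeasurableSet B →
    P (A ∩ shiftAt τ ⁻¹' B) = ∫⁻ w in A, (s (piAt τ w) : Measure (IPath X)) B ∂P

namespace RegeneratesOn

variable {s : X → PathLaw X} {P : Measure (IPath X)} {σ τ : IPath X → ℝ≥0} {A : Set (IPath X)}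

lemma congr (h : RegeneratesOn s P σ A) (hA : MeasurableSet A) (hτσ : EqOn τ σ A) :
    RegeneratesOn s P τ A := by
  intro B hB
  have shift_eq : A ∩ shiftAt τ ⁻¹' B = A ∩ shiftAt σ ⁻¹' B :=
    EqOn.inter_preimage_eq (fun w hw => congrArg w.shift (hτσ hw)) B
  rw [shift_eq, h B hB]
  exact setLIntegral_congr_fun hA fun w hw => by simp only [piAt, hτσ hw]

lemma of_univ_of_compl [IsFiniteMeasure P] (hA : MeasurableSet A)
    (h_univ : RegeneratesOn s P τ univ) (h_compl : RegeneratesOn s P τ Aᶜ) :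
    RegeneratesOn s P τ A := by
  intro B hB
  refine (ENNReal.add_left_inj (measure_ne_top P (Aᶜ ∩ shiftAt τ ⁻¹' B))).1 ?_
  calc P (A ∩ shiftAt τ ⁻¹' B) + P (Aᶜ ∩ shiftAt τ ⁻¹' B)
      = P (univ ∩ shiftAt τ ⁻¹' B) := by
        rw [univ_inter, inter_comm A, inter_comm Aᶜ, ← sdiff_eq, measure_inter_add_sdiff _ hA]
    _ = ∫⁻ w in A, (s (piAt τ w) : Measure (IPath X)) B ∂P +
          ∫⁻ w in Aᶜ, (s (piAt τ w) : Measure (IPath X)) B ∂P := by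
        rw [h_univ B hB, Measure.restrict_univ, lintegral_add_compl _ hA]
    _ = _ := by rw [h_compl B hB]

variable [PolishSpace X] [MeasurableSpace X] [BorelSpace X] (hτ : Measurable τ)
include hτ

lemma iUnion {A : ℕ → Set (IPath X)} (hA : ∀ k, MeasurableSet (A k))
    (hA_disjoint : Pairwise fun i j => Disjoint (A i) (A j))
    (h : ∀ k, RegeneratesOn s P τ (A k)) : RegeneratesOn s P τ (⋃ k, A k) := by
  intro B hB
  rw [iUnion_inter, measure_iUnion
    (fun i j hij => (hA_disjoint hij).mono inter_subset_left inter_subset_left)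
    fun k => (hA k).inter (IPath.measurable_shiftAt hτ hB), lintegral_iUnion hA hA_disjoint]
  exact tsum_congr fun k => h k B hB

end RegeneratesOn

variable [PolishSpace X] [MeasurableSpace X] [BorelSpace X] {s : X → PathLaw X}
  {τ : IPath X → ℝ≥0} {A : Set (IPath X)}

lemma IsMarkovFamily.regeneratesOn_const (hs : IsMarkovFamily s) (x : X) {t : ℝ≥0}
    (hA : MeasurableSet[natF X t] A) : RegeneratesOn s (s x) (fun _ => t) A := by
  intro B hB
  have hB_shift : MeasurableSet (IPath.shift t ⁻¹' B) := (IPath.continuous_shift t).measurable hB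
  have markov := hs.setIntegral_shift x t hA (F := B.indicator 1) (M := 1)
    (measurable_one.indicator hB) fun w => by
      by_cases hw : w ∈ B <;> simp [hw]
  have measurable_law : Measurable fun w : IPath X => (s (w t) : Measure (IPath X)) B :=
    (Measure.measurable_coe hB).comp (hs.measurable.comp (IPath.measurable_eval t))
  have lintegral_ne_top :
      ∫⁻ w in A, (s (w t) : Measure (IPath X)) B ∂(s x : Measure (IPath X)) ≠ ∞ :=
    ((lintegral_mono fun _ => prob_le_one).trans_lt (by simp)).ne
  refine (ENNReal.toReal_eq_toReal_iff' (measure_ne_top _ _) lintegral_ne_top).1 ?_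
  calc (s x : Measure (IPath X)).real (A ∩ IPath.shift t ⁻¹' B)
      = ∫ w in A, B.indicator (1 : IPath X → ℝ) (w.shift t) ∂(s x : Measure (IPath X)) := by
        rw [inter_comm, ← measureReal_restrict_apply hB_shift, ← integral_indicator_one hB_shift]
        rfl
    _ = ∫ w in A, (s (w t) : Measure (IPath X)).real B ∂(s x : Measure (IPath X)) := by
        simpa only [integral_indicator_one hB] using markov
    _ = _ := integral_toReal measurable_law.aemeasurable (.of_forall fun _ => measure_lt_top _ _)

lemma IsMarkovFamily.regeneratesOn_univ (hs : IsMarkovFamily s) (x : X) (hτ : Measurable τ)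
    (h : ∀ f : IPath X →ᵇ ℝ, ∫ w, f (w.shift (τ w)) ∂(s x : Measure (IPath X)) =
      ∫ w, intBCF f (s (piAt τ w)) ∂(s x : Measure (IPath X))) :
    RegeneratesOn s (s x) τ univ := by
  intro B hB
  rw [univ_inter, ← Measure.map_apply (IPath.measurable_shiftAt hτ) hB,
    map_eq_snd_compProd (κ := hs.kernelAt (IPath.measurable_piAt hτ)) (IPath.measurable_shiftAt hτ)
      h, Measure.snd_compProd, Measure.bind_apply hB (Kernel.aemeasurable _), Measure.restrict_univ]
  rfl

variable {l : ℕ → ℝ} {ψ : ℕ → X →ᵇ ℝ} {C : X → Set (PathLaw X)}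

namespace IsKrylovMap

variable (hC : IsKrylovMap C l ψ) (hψ : IsDeterminingData l ψ) (hs : IsMarkovFamily s)
  (hs_opt : ∀ x, hψ.optimal C x = {s x}) (x : X) (hA : MemFstopT τ A)
include hC hs hs_opt hA

lemma regeneratesOn_of_pos_of_le {T : ℝ≥0} (hT : 0 < T) (hA_pos : ∀ w ∈ A, 0 < τ w)
    (hAT : ∀ w ∈ A, τ w ≤ T) : RegeneratesOn s (s x) τ A := by
  classical
  let σ : IPath X → ℝ≥0 := A.piecewise τ fun _ => T
  have hσ : IsStopT σ := hA.isStopT_piecewise hAT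
  have hσ_pos (w : IPath X) : 0 < σ w := by
    by_cases hw : w ∈ A
    · simpa [σ, hw] using hA_pos w hw
    · simpa [σ, hw] using hT
  have whole_space : RegeneratesOn s (s x) σ univ :=
    hs.regeneratesOn_univ x hσ.measurable <| hC.integral_shift_stopping hψ hs hs_opt x hσ hσ_pos
      (piecewise_le hAT fun _ _ => le_rfl)
  have off_A : RegeneratesOn s (s x) σ Aᶜ :=
    (hs.regeneratesOn_const x (hA.measurableSet_natF hAT).compl).congr hA.1.compl
      (piecewise_eqOn_compl A τ fun _ => T)
  exact (whole_space.of_univ_of_compl hA.1 off_A).congr hA.1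
    (piecewise_eqOn A τ fun _ => T).symm

lemma regeneratesOn (hτ : IsStopT τ) : RegeneratesOn s (s x) τ A := by
  let A' : ℕ → Set (IPath X) := fun k => A ∩ {w | ⌈τ w⌉₊ = k}
  have hA' (k : ℕ) : MemFstopT τ (A' k) :=
    MeasurableSet.inter (m := hτ.past) hA
      ((Nat.measurable_ceil.comp hτ.measurable_past) (measurableSet_singleton k))
  have hA_eq : A = ⋃ k, A' k := by
    ext w
    simp [A']
  rw [hA_eq]
  refine .iUnion hτ.measurable (fun k => (hA' k).1) (fun i j hij => ?_) fun k => ?_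
  · exact disjoint_left.2 fun w hi hj => hij (hi.2.symm.trans hj.2)
  · have hA'_le (w : IPath X) (hw : w ∈ A' k) : τ w ≤ k := hw.2 ▸ Nat.le_ceil (τ w)
    rcases k.eq_zero_or_pos with rfl | hk
    · refine (hs.regeneratesOn_const x ((hA' 0).measurableSet_natF hA'_le)).congr (hA' 0).1 ?_
      exact fun w hw => le_antisymm (hA'_le w hw) (by simp)
    · refine hC.regeneratesOn_of_pos_of_le hψ hs hs_opt x (hA' k) (Nat.cast_pos.2 hk)
        (fun w hw => ?_) hA'_le
      exact Nat.ceil_pos.1 (hw.2.symm ▸ hk)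

end IsKrylovMap

end Regeneration

/-! ### The selection theorem -/

section Selection

lemma GoodData.exists_isSeparatingData {lam : ℕ → ℝ} {phi : ℕ → X → ℝ} [T1Space X]
    (h : GoodData lam phi) :
    ∃ φ : ℕ → X →ᵇ ℝ, phi = (fun n => ⇑(φ n)) ∧ IsSeparatingData lam φ := by
  obtain ⟨pos, dense, continuous, bounded, separates, mul_closed, pairs⟩ := h
  choose M hM using bounded
  refine ⟨fun n => .ofNormedAddCommGroup (phi n) (continuous n) (M n) (hM n), rfl, pos, dense,
    fun x y hxy => ?_, fun m n => ?_, fun m n => ?_⟩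
  · obtain ⟨n, ε, hε, h_sep⟩ := separates x {y}ᶜ (isOpen_compl_singleton.mem_nhds hxy)
    have := hε.trans_le (h_sep y (by simp))
    exact ⟨n, sub_ne_zero.1 (abs_pos.1 this)⟩
  · obtain ⟨k, hk⟩ := mul_closed m n
    exact ⟨k, DFunLike.coe_injective hk⟩
  · obtain ⟨k, hlam, hphi⟩ := pairs m n
    exact ⟨k, hlam, DFunLike.coe_injective hphi⟩

variable [PolishSpace X] [MeasurableSpace X] [BorelSpace X] {lam : ℕ → ℝ} {φ : ℕ → X →ᵇ ℝ}
  {C : X → Set (PathLaw X)}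

lemma IsStrongKrylov.isKrylovMap (hC : IsStrongKrylov C lam fun n => ⇑(φ n)) :
    IsKrylovMap C lam φ := by
  obtain ⟨values, measurable, start, shift_mem, shift_surj⟩ := hC
  refine ⟨⟨fun x => (values x).1, fun x => (values x).2.1, measurable⟩, fun x P hP => ?_,
    fun x P hP τ hτ hτ_pos R hR => ?_, fun x P hP τ hτ hτ_pos R hR => ?_⟩
  · have : MeasurableSet {w : IPath X | w 0 = x} :=
      IPath.measurable_eval 0 (measurableSet_singleton x)
    exact (prob_compl_eq_zero_iff this).2 (start x P hP)
  · obtain ⟨R', hR', hR'_mem⟩ := shift_mem x P hP τ hτ hτ_pos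
    rwa [show R = R' from Subtype.ext (hR.trans hR'.symm)]
  · obtain ⟨Q, ⟨hQ, -, hzeta⟩, hQR⟩ := (shift_surj x P hP τ hτ hτ_pos R).1 hR
    exact ⟨Q, hQ, hQR, hzeta⟩

theorem strong_krylov_strong_markov_selection_general (hφ : IsSeparatingData lam φ)
    (hC : IsKrylovMap C lam φ) :
    ∃ sel : X → PathLaw X,
      (∀ U : Set (PathLaw X), IsOpen U → MeasurableSet (sel ⁻¹' U)) ∧
      (∀ x, sel x ∈ C x) ∧
      ∀ x, ∀ τ : IPath X → ℝ≥0, IsStopT τ → ∀ A : Set (IPath X), MemFstopT τ A →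
        RegeneratesOn sel (sel x) τ A := by
  obtain ⟨l, ψ, hψ, hCψ⟩ := hC.exists_isDeterminingData hφ
  obtain ⟨s, hs, hs_opt, hs_open⟩ := hCψ.exists_isMarkovFamily hψ
  refine ⟨s, hs_open, fun x => lexArgmaxAll_subset ((hs_opt x).symm ▸ mem_singleton (s x)), ?_⟩
  exact fun x τ hτ A hA => hCψ.regeneratesOn hψ hs hs_opt x hA hτ

end Selection

end

/-- **Every strong Krylov set-valued map admits a strong Markov selection:** a
measurable selection `x ↦ P_x ∈ 𝒞(x)` such that for every finite stopping time `τ`,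
`P_x[θ_τ⁻¹(·) | ℱ_τ](w) = P_{π_τ(w)}(·)` for `P_x`-a.e. `w`. -/
theorem strong_krylov_strong_markov_selection
    {X : Type*} [TopologicalSpace X] [PolishSpace X] [MeasurableSpace X] [BorelSpace X]
    (lam : ℕ → ℝ) (phi : ℕ → X → ℝ) (hdata : GoodData lam phi)
    (C : X → Set (ProbabilityMeasure (IPath X)))
    (hK : IsStrongKrylov C lam phi) :
    ∃ sel : X → ProbabilityMeasure (IPath X),
      (∀ U : Set (ProbabilityMeasure (IPath X)), IsOpen U →
        MeasurableSet (sel ⁻¹' U)) ∧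
      (∀ x, sel x ∈ C x) ∧
      ∀ x, ∀ τ : IPath X → ℝ≥0, IsStopT τ →
        ∀ A : Set (IPath X), MemFstopT τ A →
          ∀ B : Set (IPath X), MeasurableSet B →
            (sel x : Measure (IPath X)) (A ∩ shiftAt τ ⁻¹' B) =
              ∫⁻ w in A, (sel (piAt τ w) : Measure (IPath X)) B
                ∂(sel x : Measure (IPath X)) := by
  obtain ⟨φ, rfl, hφ⟩ := hdata.exists_isSeparatingData
  exact strong_krylov_strong_markov_selection_general hφ hK.isKrylovMap
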